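/- arXiv:2103.00253 — 2 statements merged into one kernel-verified Lean document; each statement's English description precedes it below -/
import Mathlib

section
/- Let R be a two-dimensional commutative Noetherian local ring and let M be a nonzero torsion-free finitely generated R-module (for example, a nonzero ideal of R). If M has finite injective dimension and finite reducing Gorenstein dimension, then R is Gorenstein. -/
open CategoryTheory Pointwise

universe u

variable (R : Type u) [CommRing R]

/-- `Ext^n_R(X, Y) = 0`. -/
def ExtVanish (X Y : Type u) [AddCommGroup X] [Module R X]
    [AddCommGroup Y] [Module R Y] (n : ℕ) : Prop :=
  Subsingleton (((Ext R (ModuleCat.{u} R) n).obj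
    (Opposite.op (ModuleCat.of R X))).obj (ModuleCat.of R Y))

/-- A finitely generated module `X` is totally reflexive if the evaluation map to the
double dual is bijective and `Ext^i(X, R) = 0 = Ext^i(X^*, R)` for all `i ≥ 1`. -/
def IsTotallyReflexive (X : Type u) [AddCommGroup X] [Module R X] : Prop :=
  Module.Finite R X ∧
  Function.Bijective (Module.Dual.eval R X) ∧
  (∀ i : ℕ, 1 ≤ i → ExtVanish R X R i) ∧
  (∀ i : ℕ, 1 ≤ i → ExtVanish R (Module.Dual R X) R i)

/-- `0 → A → B → C → 0` is a short exact sequence. -/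
def IsShortExact {A B C : Type u} [AddCommGroup A] [Module R A] [AddCommGroup B] [Module R B]
    [AddCommGroup C] [Module R C] (f : A →ₗ[R] B) (g : B →ₗ[R] C) : Prop :=
  Function.Injective f ∧ Function.Surjective g ∧ Function.Exact f g

/-- Gorenstein dimension at most `n`: there is a resolution of length `≤ n`
by totally reflexive modules. -/
def GdimLE : ℕ → ModuleCat.{u} R → Prop
  | 0, M => IsTotallyReflexive R M
  | n + 1, M => ∃ (X K : ModuleCat.{u} R) (f : K →ₗ[R] X) (g : X →ₗ[R] M),
      IsTotallyReflexive R X ∧ IsShortExact R f g ∧ GdimLE n K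

/-- Projective dimension at most `n`. -/
def PdimLE : ℕ → ModuleCat.{u} R → Prop
  | 0, M => Module.Finite R M ∧ Module.Projective R M
  | n + 1, M => ∃ (X K : ModuleCat.{u} R) (f : K →ₗ[R] X) (g : X →ₗ[R] M),
      Module.Finite R X ∧ Module.Projective R X ∧ IsShortExact R f g ∧ PdimLE n K

/-- Injective dimension at most `n`. -/
def InjdimLE : ℕ → ModuleCat.{u} R → Prop
  | 0, M => Module.Injective R M
  | n + 1, M => ∃ (I C : ModuleCat.{u} R) (f : M →ₗ[R] I) (g : I →ₗ[R] C),
      Module.Injective R I ∧ IsShortExact R f g ∧ InjdimLE n C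

/-- The Gorenstein dimension, as an element of `ℕ∞`. -/
noncomputable def Gdim (M : ModuleCat.{u} R) : ℕ∞ :=
  sInf {n : ℕ∞ | ∃ m : ℕ, n = (m : ℕ∞) ∧ GdimLE R m M}

/-- The projective dimension, as an element of `ℕ∞`. -/
noncomputable def Pdim (M : ModuleCat.{u} R) : ℕ∞ :=
  sInf {n : ℕ∞ | ∃ m : ℕ, n = (m : ℕ∞) ∧ PdimLE R m M}

/-- A local ring is Gorenstein if it has finite injective dimension over itself. -/
def IsGorensteinRing : Prop :=
  ∃ n : ℕ, InjdimLE R n (ModuleCat.of R R)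

/-- `IsSyzygy R n S K` : `S` is an `n`-th syzygy of `K`, i.e. there is an exact sequence
`0 → S → F_{n-1} → ⋯ → F_0 → K → 0` with each `F_j` finitely generated free. -/
def IsSyzygy : ℕ → ModuleCat.{u} R → ModuleCat.{u} R → Prop
  | 0, S, K => Nonempty (S ≃ₗ[R] K)
  | n + 1, S, K => ∃ (W F : ModuleCat.{u} R) (f : W →ₗ[R] F) (g : F →ₗ[R] K),
      Module.Free R F ∧ Module.Finite R F ∧ IsShortExact R f g ∧ IsSyzygy n S W

/-- One step in a reducing sequence: a short exact sequence
`0 → K^{⊕a} → L → (Ω^n K)^{⊕b} → 0`. -/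
def ReducingStep (K L : ModuleCat.{u} R) (a b n : ℕ) : Prop :=
  ∃ (W : ModuleCat.{u} R) (f : (Fin a → K) →ₗ[R] L) (g : L →ₗ[R] (Fin b → W)),
    IsSyzygy R n W K ∧ IsShortExact R f g

/-- `M` admits a reducing sequence `K_0 = M, K_1, …, K_r` relative to the property `P`,
that is, short exact sequences `0 → K_{i-1}^{⊕a_i} → K_i → (Ω^{n_i}K_{i-1})^{⊕b_i} → 0`
with `a_i, b_i, n_i ≥ 1` and `P (K_r)`. -/
def HasReducingSeq (P : ModuleCat.{u} R → Prop) (M : ModuleCat.{u} R) (r : ℕ) : Prop :=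
  ∃ (K : Fin (r + 1) → ModuleCat.{u} R) (a b n : Fin r → ℕ),
    K 0 = M ∧ (∀ i, Module.Finite R (K i)) ∧
    (∀ i : Fin r, 1 ≤ a i ∧ 1 ≤ b i ∧ 1 ≤ n i ∧
      ReducingStep R (K i.castSucc) (K i.succ) (a i) (b i) (n i)) ∧
    P (K (Fin.last r))

/-- The reducing invariant attached to the finiteness property `P`. -/
noncomputable def ReducingDim (P : ModuleCat.{u} R → Prop) (M : ModuleCat.{u} R) : ℕ∞ :=
  sInf {n : ℕ∞ | ∃ r : ℕ, n = (r : ℕ∞) ∧ HasReducingSeq R P M r}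

/-- The reducing Gorenstein dimension. -/
noncomputable def rGdim (M : ModuleCat.{u} R) : ℕ∞ :=
  ReducingDim R (fun N => ∃ m : ℕ, GdimLE R m N) M

/-- The reducing projective dimension. -/
noncomputable def rPdim (M : ModuleCat.{u} R) : ℕ∞ :=
  ReducingDim R (fun N => ∃ m : ℕ, PdimLE R m N) M

/-- depth of a module over a local ring: `inf { i | Ext^i(k, M) ≠ 0 }`. -/
noncomputable def depth [IsLocalRing R] (M : ModuleCat.{u} R) : ℕ∞ :=
  sInf {n : ℕ∞ | ∃ i : ℕ, n = (i : ℕ∞) ∧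
    ¬ ExtVanish R (R ⧸ IsLocalRing.maximalIdeal R) M i}

/-- maximal Cohen-Macaulay: depth equals the Krull dimension of the ring. -/
def IsMCM [IsLocalRing R] (M : ModuleCat.{u} R) : Prop :=
  (depth R M : WithBot ℕ∞) = ringKrullDim R

/-- torsion-free: every non zero-divisor of `R` is a non zero-divisor on `M`. -/
def IsTorsionFreeModule (M : Type u) [AddCommGroup M] [Module R M] : Prop :=
  ∀ r ∈ nonZeroDivisors R, ∀ m : M, r • m = 0 → m = 0

/-!
Let `t = depth R ≤ dim R = 2` and `s = t - 1`. Torsion-freeness gives `s ≤ depth M`, and finiteness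
of the injective dimension makes it at most `t`, so `Ext^j(K, M) = 0` for `j ≥ 2` and every finitely
generated `K` of depth at least `s`. All terms `K_i` of a reducing sequence of `M` have depth at
least `s`, hence the obstruction to extending a retraction `K_{i-1} → M` to `K_i → M` vanishes and
`M` is a direct summand of a module `N` of finite Gorenstein dimension. Embed `N` in a module `P` of
finite projective dimension with totally reflexive cokernel `C`: as `Ext^1(C, M) = 0`, the module
`M` is even a summand of `P`, so it has finite projective dimension. Since `Ext^j(M, M) = 0` for
`j ≥ 2`, that dimension is at most one. A free presentation `0 → L → F → M → 0`, with a coordinate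
of `F` that maps `L` into the maximal ideal, finally shows that `Ext^j(k, M) = 0` implies
`Ext^j(k, R) = 0`, and the latter for all large `j` says that `R` is Gorenstein.
-/

section Development

variable {R}

variable {A B C K M N X Y : Type u} [AddCommGroup A] [Module R A] [AddCommGroup B] [Module R B]
  [AddCommGroup C] [Module R C] [AddCommGroup K] [Module R K] [AddCommGroup M] [Module R M]
  [AddCommGroup N] [Module R N] [AddCommGroup X] [Module R X] [AddCommGroup Y] [Module R Y]

section Ext

theorem extVanish_iff_exactAt (P : ProjectiveResolution (ModuleCat.of R X)) (n : ℕ) :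
    ExtVanish R X Y n ↔ (P.complex.linearYonedaObj R (ModuleCat.of R Y)).ExactAt n := by
  rw [HomologicalComplex.exactAt_iff_isZero_homology,
    ← (P.isoExt (R := R) n (ModuleCat.of R Y)).isZero_iff, ModuleCat.isZero_iff_subsingleton]
  rfl

theorem extVanish_zero_iff : ExtVanish R X Y 0 ↔ ∀ f : X →ₗ[R] Y, f = 0 := by
  let P := projectiveResolution (ModuleCat.of R X)
  have hd : (P.complex.linearYonedaObj R (ModuleCat.of R Y)).d 0 0 = 0 :=
    HomologicalComplex.shape _ _ _ (by simp)
  rw [extVanish_iff_exactAt P, HomologicalComplex.exactAt_iff' _ 0 0 1 (by simp) (by simp),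
    ShortComplex.moduleCat_exact_iff]
  constructor
  · intro h f
    obtain ⟨g, hg⟩ := h (P.π.f 0 ≫ ModuleCat.ofHom f)
      ((P.complex_d_comp_π_f_zero_assoc (ModuleCat.ofHom f)).trans Limits.zero_comp)
    have hπ : P.π.f 0 ≫ ModuleCat.ofHom f = P.π.f 0 ≫ 0 :=
      (hg.symm.trans (ConcreteCategory.congr_hom hd g)).trans Limits.comp_zero.symm
    exact congrArg ModuleCat.Hom.hom ((cancel_epi (P.π.f 0)).1 hπ)
  · intro h f hf
    obtain ⟨g, rfl⟩ := Limits.CokernelCofork.IsColimit.desc' P.isColimitCokernelCofork f hf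
    obtain rfl : g = 0 := ModuleCat.hom_ext (h g.hom)
    exact ⟨0, (map_zero _).trans Limits.comp_zero.symm⟩

theorem extVanish_iff {n : ℕ} :
    ExtVanish R X Y n ↔ ∀ e : Abelian.Ext (ModuleCat.of R X) (ModuleCat.of R Y) n, e = 0 := by
  obtain _ | n := n
  · rw [extVanish_zero_iff, (Abelian.Ext.mk₀_bijective _ _).surjective.forall]
    simp only [Abelian.Ext.mk₀_eq_zero_iff, ModuleCat.hom_ext_iff]
    exact ⟨fun h f => h f.hom, fun h f => h (ModuleCat.ofHom f)⟩
  · let P := projectiveResolution (ModuleCat.of R X)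
    rw [extVanish_iff_exactAt P,
      HomologicalComplex.exactAt_iff' _ n (n + 1) (n + 2) (by simp) (by simp),
      ShortComplex.moduleCat_exact_iff]
    constructor
    · intro h e
      obtain ⟨f, hf, rfl⟩ := P.extMk_surjective e (n + 2) rfl
      exact (P.extMk_eq_zero_iff f (n + 2) rfl hf n rfl).2 (h f hf)
    · intro h f hf
      exact (P.extMk_eq_zero_iff f (n + 2) rfl hf n rfl).1 (h _)

namespace IsShortExact

theorem of_injective {f : A →ₗ[R] B} (hf : Function.Injective f) :
    IsShortExact R f (LinearMap.range f).mkQ :=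
  ⟨hf, Submodule.mkQ_surjective _, LinearMap.exact_map_mkQ_range f⟩

theorem of_surjective {g : B →ₗ[R] C} (hg : Function.Surjective g) :
    IsShortExact R (LinearMap.ker g).subtype g :=
  ⟨Submodule.injective_subtype _, hg, LinearMap.exact_subtype_ker_map g⟩

theorem lsmul {x : R} (hx : IsSMulRegular A x) :
    IsShortExact R (LinearMap.lsmul R A x) (x • (⊤ : Submodule R A)).mkQ :=
  ⟨hx, Submodule.mkQ_surjective _, fun a => by
    rw [Submodule.mkQ_apply, Submodule.Quotient.mk_eq_zero]
    simp [Submodule.mem_smul_pointwise_iff_exists]⟩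

variable {f : A →ₗ[R] B} {g : B →ₗ[R] C}

theorem finite_mid (h : IsShortExact R f g) [Module.Finite R A] [Module.Finite R C] :
    Module.Finite R B :=
  Module.Finite.of_exact h.2.2 h.2.1

/-- The short exact sequence `0 → A → B → C → 0` as a short complex in the category of modules,
to which the long exact sequences of `Ext` apply. -/
abbrev shortComplex (h : IsShortExact R f g) : ShortComplex (ModuleCat.{u} R) :=
  ShortComplex.mk (ModuleCat.ofHom f) (ModuleCat.ofHom g)
    (ModuleCat.hom_ext h.2.2.linearMap_comp_eq_zero)

theorem shortExact (h : IsShortExact R f g) : h.shortComplex.ShortExact :=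
  ModuleCat.shortComplex_shortExact _ h.2.2 h.1 h.2.1

variable {n : ℕ}

theorem extVanish_fst₁ (h : IsShortExact R f g) (hB : ExtVanish R B M n)
    (hC : ExtVanish R C M (n + 1)) : ExtVanish R A M n := by
  rw [extVanish_iff] at *
  intro e
  obtain ⟨e', rfl⟩ := Abelian.Ext.contravariant_sequence_exact₁ h.shortExact _ e
    (Nat.add_comm 1 n) (hC _)
  rw [hB e', Abelian.Ext.comp_zero]

theorem extVanish_fst₂ (h : IsShortExact R f g) (hA : ExtVanish R A M n)
    (hC : ExtVanish R C M n) : ExtVanish R B M n := by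
  rw [extVanish_iff] at *
  intro e
  obtain ⟨e', rfl⟩ := Abelian.Ext.contravariant_sequence_exact₂ h.shortExact _ e (hA _)
  rw [hC e', Abelian.Ext.comp_zero]

theorem extVanish_fst₃ (h : IsShortExact R f g) (hA : ExtVanish R A M n)
    (hB : ExtVanish R B M (n + 1)) : ExtVanish R C M (n + 1) := by
  rw [extVanish_iff] at *
  intro e
  obtain ⟨e', rfl⟩ := Abelian.Ext.contravariant_sequence_exact₃ h.shortExact _ e (hB _)
    (Nat.add_comm 1 n)
  rw [hA e', Abelian.Ext.comp_zero]

theorem extVanish_snd₁ (h : IsShortExact R f g) (hC : ExtVanish R M C n)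
    (hB : ExtVanish R M B (n + 1)) : ExtVanish R M A (n + 1) := by
  rw [extVanish_iff] at *
  intro e
  obtain ⟨e', rfl⟩ := Abelian.Ext.covariant_sequence_exact₁ _ h.shortExact e (hB _) rfl
  rw [hC e', Abelian.Ext.zero_comp]

theorem extVanish_snd₂ (h : IsShortExact R f g) (hA : ExtVanish R M A n)
    (hC : ExtVanish R M C n) : ExtVanish R M B n := by
  rw [extVanish_iff] at *
  intro e
  obtain ⟨e', rfl⟩ := Abelian.Ext.covariant_sequence_exact₂ _ h.shortExact e (hC _)
  rw [hA e', Abelian.Ext.zero_comp]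

theorem extVanish_snd₃ (h : IsShortExact R f g) (hB : ExtVanish R M B n)
    (hA : ExtVanish R M A (n + 1)) : ExtVanish R M C n := by
  rw [extVanish_iff] at *
  intro e
  obtain ⟨e', rfl⟩ := Abelian.Ext.covariant_sequence_exact₃ _ h.shortExact e rfl (hA _)
  rw [hB e', Abelian.Ext.zero_comp]

theorem exists_extension (h : IsShortExact R f g) (hC : ExtVanish R C M 1) (φ : A →ₗ[R] M) :
    ∃ ψ : B →ₗ[R] M, ψ ∘ₗ f = φ := by
  obtain ⟨e, he⟩ := Abelian.Ext.contravariant_sequence_exact₁ h.shortExact (ModuleCat.of R M)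
    (Abelian.Ext.mk₀ (ModuleCat.ofHom φ)) (add_zero 1) (extVanish_iff.1 hC _)
  obtain ⟨ψ, rfl⟩ := (Abelian.Ext.mk₀_bijective _ _).2 e
  rw [Abelian.Ext.mk₀_comp_mk₀] at he
  exact ⟨ψ.hom, congrArg ModuleCat.Hom.hom ((Abelian.Ext.mk₀_bijective _ _).1 he)⟩

theorem extVanish_one_of_exists_extension (h : IsShortExact R f g) (hB : ExtVanish R B M 1)
    (hφ : ∀ φ : A →ₗ[R] M, ∃ ψ : B →ₗ[R] M, ψ ∘ₗ f = φ) : ExtVanish R C M 1 := by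
  rw [extVanish_iff] at *
  intro e
  obtain ⟨e', rfl⟩ := Abelian.Ext.contravariant_sequence_exact₃ h.shortExact _ e (hB _)
    (add_zero 1)
  obtain ⟨φ, rfl⟩ := (Abelian.Ext.mk₀_bijective _ _).2 e'
  obtain ⟨ψ, hψ⟩ := hφ φ.hom
  obtain rfl : h.shortComplex.f ≫ ModuleCat.ofHom ψ = φ := ModuleCat.hom_ext hψ
  rw [← Abelian.Ext.mk₀_comp_mk₀, ShortComplex.ShortExact.extClass_comp_assoc]

end IsShortExact

namespace ExtVanish

variable {n : ℕ}

theorem of_projective [Module.Projective R A] : ExtVanish R A M (n + 1) :=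
  extVanish_iff.2 Abelian.Ext.eq_zero_of_projective

theorem of_injective [Module.Injective R M] : ExtVanish R A M (n + 1) :=
  have : Injective (ModuleCat.of R M) := Module.injective_object_of_injective_module R M
  extVanish_iff.2 Abelian.Ext.eq_zero_of_injective

theorem of_forall_exists_smul [IsLocalRing R] [IsNoetherianRing R] [Module.Finite R A]
    [Module.Finite R M] {x : R} (hx : x ∈ IsLocalRing.maximalIdeal R)
    (h : ∀ e : Abelian.Ext (ModuleCat.of R A) (ModuleCat.of R M) n, ∃ e', x • e' = e) :
    ExtVanish R A M n := by
  have hle : (⊤ : Submodule R (Abelian.Ext (ModuleCat.of R A) (ModuleCat.of R M) n)) ≤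
      IsLocalRing.maximalIdeal R • ⊤ := by
    intro e _
    obtain ⟨e', rfl⟩ := h e
    exact Submodule.smul_mem_smul hx Submodule.mem_top
  have htop := Submodule.eq_bot_of_le_smul_of_le_jacobson_bot _ _ Module.Finite.fg_top hle
    (IsLocalRing.maximalIdeal_le_jacobson _)
  exact extVanish_iff.2 fun e => (Submodule.mem_bot R).1 (htop ▸ Submodule.mem_top)

end ExtVanish

theorem mk₀_lsmul_comp {n : ℕ} (x : R)
    (e : Abelian.Ext (ModuleCat.of R A) (ModuleCat.of R M) n) :
    (Abelian.Ext.mk₀ (ModuleCat.ofHom (LinearMap.lsmul R A x))).comp e (zero_add n) = x • e := by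
  have hx : ModuleCat.ofHom (LinearMap.lsmul R A x) = x • 𝟙 (ModuleCat.of R A) := rfl
  rw [hx, Abelian.Ext.mk₀_smul, Abelian.Ext.smul_comp, Abelian.Ext.mk₀_id_comp]

theorem comp_mk₀_lsmul {n : ℕ} (x : R)
    (e : Abelian.Ext (ModuleCat.of R A) (ModuleCat.of R M) n) :
    e.comp (Abelian.Ext.mk₀ (ModuleCat.ofHom (LinearMap.lsmul R M x))) (add_zero n) = x • e :=
  (e.smul_eq_comp_mk₀ x).symm

theorem smul_ext_eq_zero {n : ℕ} {x : R} (hx : x ∈ Module.annihilator R A)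
    (e : Abelian.Ext (ModuleCat.of R A) (ModuleCat.of R M) n) : x • e = 0 := by
  rw [← mk₀_lsmul_comp, Module.mem_annihilator_iff_lsmul_eq_zero.1 hx]
  exact (congrArg (Abelian.Ext.comp · e _) (Abelian.Ext.mk₀_zero _ _)).trans
    (Abelian.Ext.zero_comp ..)

end Ext

section Devissage

/-- A class of modules that contains the zero modules and is closed under extensions. -/
structure IsExtensionClosed (P : ModuleCat.{u} R → Prop) : Prop where
  of_subsingleton (A : Type u) [AddCommGroup A] [Module R A] [Subsingleton A] : P (.of R A)
  extension {A B C : Type u} [AddCommGroup A] [Module R A] [AddCommGroup B] [Module R B]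
    [AddCommGroup C] [Module R C] {f : A →ₗ[R] B} {g : B →ₗ[R] C} :
    IsShortExact R f g → P (.of R A) → P (.of R C) → P (.of R B)

namespace IsExtensionClosed

variable {P : ModuleCat.{u} R → Prop}

theorem congr (hP : IsExtensionClosed P) (e : A ≃ₗ[R] B) (hA : P (.of R A)) : P (.of R B) :=
  hP.extension ⟨e.injective, Function.surjective_to_subsingleton (0 : B →ₗ[R] PUnit.{u + 1}),
    (LinearMap.exact_zero_iff_surjective _ _).2 e.surjective⟩ hA (hP.of_subsingleton _)

theorem pi (hP : IsExtensionClosed P) (hA : P (.of R A)) (n : ℕ) : P (.of R (Fin n → A)) := by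
  induction n with
  | zero => exact hP.of_subsingleton _
  | succ n ih =>
    have hprod : P (.of R (A × (Fin n → A))) :=
      hP.extension ⟨LinearMap.inl_injective, LinearMap.snd_surjective, Function.Exact.inl_snd⟩ hA ih
    exact hP.congr (Fin.consLinearEquiv R fun _ => A) hprod

theorem of_free [Nontrivial R] (hP : IsExtensionClosed P) (hR : P (.of R R)) [Module.Free R A]
    [Module.Finite R A] : P (.of R A) :=
  hP.congr (Module.finBasis R A).equivFun.symm (hP.pi hR _)

theorem of_forall_isPrime [IsNoetherianRing R] (hP : IsExtensionClosed P) {J : Ideal R}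
    (h : ∀ p : Ideal R, p.IsPrime → J ≤ p → P (.of R (R ⧸ p))) [Module.Finite R A]
    (hJ : J ≤ Module.annihilator R A) : P (.of R A) := by
  have hA : Module.Finite R A := inferInstance
  induction hA using IsNoetherianRing.induction_on_isQuotientEquivQuotientPrime with
  | subsingleton N => exact hP.of_subsingleton N
  | quotient N p e =>
    refine hP.congr e.symm (h p.1 p.2 (hJ.trans_eq ?_))
    rw [e.annihilator_eq, Ideal.annihilator_quotient]
  | exact N₁ N₂ N₃ f g hf hg hfg h₁ h₃ =>
    exact hP.extension ⟨hf, hg, hfg⟩ (h₁ (hJ.trans (f.annihilator_le_of_injective hf)))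
      (h₃ (hJ.trans (g.annihilator_le_of_surjective hg)))

/-- Dévissage: for a prime `p ≠ 𝔪` and `x ∈ 𝔪 \ p`, the module `R ⧸ p` is recovered from its
quotient by `x`, which has a filtration with factors `R ⧸ q` for primes `q` strictly above `p`. -/
theorem of_residueField [IsNoetherianRing R] [IsLocalRing R] (hP : IsExtensionClosed P)
    (hk : P (.of R (R ⧸ IsLocalRing.maximalIdeal R)))
    (hreg : ∀ (N : Type u) [AddCommGroup N] [Module R N] [Module.Finite R N],
      ∀ x ∈ IsLocalRing.maximalIdeal R, IsSMulRegular N x → P (.of R (QuotSMulTop x N)) →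
        P (.of R N))
    (N : Type u) [AddCommGroup N] [Module R N] [Module.Finite R N] : P (.of R N) := by
  refine hP.of_forall_isPrime (J := ⊥) (fun p hp _ => ?_) bot_le
  induction p using WellFoundedGT.induction with | ind p ih =>
  obtain rfl | hm := eq_or_ne p (IsLocalRing.maximalIdeal R)
  · exact hk
  obtain ⟨x, hx, hxp⟩ := SetLike.exists_of_lt ((IsLocalRing.le_maximalIdeal hp.ne_top).lt_of_ne hm)
  have hxreg : IsSMulRegular (R ⧸ p) x :=
    (isSMulRegular_quotient_iff_mem_of_smul_mem p x).2 fun a ha =>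
      (hp.mem_or_mem ha).resolve_left hxp
  refine hreg _ x hx hxreg (hP.of_forall_isPrime (J := p ⊔ Ideal.span {x}) (fun q hq hle => ?_) ?_)
  · have hxq : x ∈ q := hle (Ideal.mem_sup_right (Ideal.mem_span_singleton_self x))
    exact ih q ((le_sup_left.trans hle).lt_of_not_ge fun hqp => hxp (hqp hxq)) hq bot_le
  · refine sup_le (Ideal.annihilator_quotient.symm.le.trans ?_)
      ((Ideal.span_singleton_le_iff_mem _).2 (QuotSMulTop.mem_annihilator _ x))
    exact LinearMap.annihilator_le_of_surjective _ (Submodule.mkQ_surjective _)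

end IsExtensionClosed

end Devissage

namespace ExtVanish

variable {n : ℕ}

theorem isExtensionClosed_fst (M : Type u) [AddCommGroup M] [Module R M] (n : ℕ) :
    IsExtensionClosed (R := R) fun A => ExtVanish R A M n where
  of_subsingleton A _ _ _ := extVanish_iff.2 fun e => by
    rw [← one_smul R e, smul_ext_eq_zero (Module.mem_annihilator.2 fun a => Subsingleton.elim _ _)]
  extension h := h.extVanish_fst₂

theorem isExtensionClosed_snd (M : Type u) [AddCommGroup M] [Module R M] (n : ℕ) :
    IsExtensionClosed (R := R) fun A => ExtVanish R M A n where
  of_subsingleton A _ _ _ := extVanish_iff.2 fun e => by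
    rw [← one_smul R e, ← comp_mk₀_lsmul, Subsingleton.elim (LinearMap.lsmul R A 1) 0]
    exact (congrArg (Abelian.Ext.comp e · _) (Abelian.Ext.mk₀_zero _ _)).trans
      (Abelian.Ext.comp_zero ..)
  extension h := h.extVanish_snd₂

end ExtVanish

theorem extVanish_quotSMulTop_iff {x : R} (hxA : x ∈ Module.annihilator R A)
    (hxK : IsSMulRegular K x) {n : ℕ} :
    ExtVanish R A (QuotSMulTop x K) n ↔ ExtVanish R A K n ∧ ExtVanish R A K (n + 1) := by
  have h := IsShortExact.lsmul hxK
  refine ⟨fun hq => ⟨?_, ?_⟩, fun ⟨h₀, h₁⟩ => h.extVanish_snd₃ h₀ h₁⟩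
  all_goals rw [extVanish_iff] at *
  · intro e
    obtain ⟨e', rfl⟩ := Abelian.Ext.covariant_sequence_exact₂ _ h.shortExact e (hq _)
    exact (comp_mk₀_lsmul x e').trans (smul_ext_eq_zero hxA e')
  · intro e
    obtain ⟨e', rfl⟩ := Abelian.Ext.covariant_sequence_exact₁ _ h.shortExact e
      ((comp_mk₀_lsmul x e).trans (smul_ext_eq_zero hxA e)) rfl
    rw [hq e', Abelian.Ext.zero_comp]

theorem extVanish_zero_iff_exists_isSMulRegular [IsNoetherianRing R] [Module.Finite R A]
    [Module.Finite R K] :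
    ExtVanish R A K 0 ↔ ∃ x ∈ Module.annihilator R A, IsSMulRegular K x := by
  rw [← IsSMulRegular.subsingleton_linearMap_iff, extVanish_zero_iff, subsingleton_iff_forall_eq 0]

section Depth

variable [IsLocalRing R] {n : ℕ}

open IsLocalRing

theorem le_depth_iff :
    (n : ℕ∞) ≤ depth R (.of R K) ↔ ∀ i < n, ExtVanish R (R ⧸ maximalIdeal R) K i := by
  simp only [depth, le_sInf_iff, Set.mem_ofPred_eq, forall_exists_index, and_imp]
  constructor
  · intro h i hi
    by_contra hK
    exact hi.not_ge (Nat.cast_le.1 (h i i rfl hK))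
  · rintro h _ i rfl hi
    exact Nat.cast_le.2 (not_lt.1 fun hin => hi (h i hin))

theorem isExtensionClosed_le_depth (n : ℕ) :
    IsExtensionClosed (R := R) fun A => (n : ℕ∞) ≤ depth R A where
  of_subsingleton A _ _ _ :=
    le_depth_iff.2 fun i _ => (ExtVanish.isExtensionClosed_snd _ i).of_subsingleton A
  extension h hA hC := le_depth_iff.2 fun i hi =>
    h.extVanish_snd₂ (le_depth_iff.1 hA i hi) (le_depth_iff.1 hC i hi)

theorem IsShortExact.le_depth₁ {f : A →ₗ[R] B} {g : B →ₗ[R] C} (h : IsShortExact R f g)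
    (hB : n ≤ depth R (.of R B)) (hC : n ≤ depth R (.of R C) + 1) : n ≤ depth R (.of R A) := by
  rw [le_depth_iff] at *
  rintro (_ | i) hi
  · rw [extVanish_zero_iff]
    intro φ
    exact LinearMap.cancel_left h.1 |>.1 <| by
      rw [extVanish_zero_iff.1 (hB 0 hi) (f ∘ₗ φ), LinearMap.comp_zero]
  · have hC' : ((i + 1 : ℕ) : ℕ∞) ≤ depth R (.of R C) := by
      refine (ENat.add_le_add_iff_right ENat.one_ne_top).1 (le_trans ?_ hC)
      exact_mod_cast hi
    exact h.extVanish_snd₁ (le_depth_iff.1 hC' i i.lt_succ_self) (hB _ hi)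

theorem one_le_depth_iff [IsNoetherianRing R] [Module.Finite R K] :
    1 ≤ depth R (.of R K) ↔ ∃ x ∈ maximalIdeal R, IsSMulRegular K x := by
  rw [← Nat.cast_one, le_depth_iff]
  simp only [Nat.lt_one_iff, forall_eq]
  rw [extVanish_zero_iff_exists_isSMulRegular, Ideal.annihilator_quotient]

theorem succ_le_depth_iff [IsNoetherianRing R] [Module.Finite R K] {x : R}
    (hx : x ∈ maximalIdeal R) (hxK : IsSMulRegular K x) :
    ((n + 1 : ℕ) : ℕ∞) ≤ depth R (.of R K) ↔ n ≤ depth R (.of R (QuotSMulTop x K)) := by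
  have hann : x ∈ Module.annihilator R (R ⧸ maximalIdeal R) := by
    rwa [Ideal.annihilator_quotient]
  simp only [le_depth_iff, extVanish_quotSMulTop_iff hann hxK]
  refine ⟨fun h i hi => ⟨h i (by lia), h (i + 1) (by lia)⟩, fun h i hi => ?_⟩
  obtain _ | i := i
  · exact extVanish_zero_iff_exists_isSMulRegular.2 ⟨x, hann, hxK⟩
  · exact (h i (by lia)).2

theorem depth_quotSMulTop_add_one [IsNoetherianRing R] [Module.Finite R K] {x : R}
    (hx : x ∈ maximalIdeal R) (hxK : IsSMulRegular K x) :
    depth R (.of R (QuotSMulTop x K)) + 1 = depth R (.of R K) := by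
  refine ENat.eq_of_forall_natCast_le_iff fun n => ?_
  obtain _ | n := n
  · simp
  · rw [succ_le_depth_iff hx hxK, Nat.cast_succ, ENat.add_le_add_iff_right ENat.one_ne_top]

theorem natCast_le_supportDim [IsNoetherianRing R] (n : ℕ) (K : Type u) [AddCommGroup K]
    [Module R K] [Module.Finite R K] [Nontrivial K] (h : n ≤ depth R (.of R K)) :
    n ≤ Module.supportDim R K := by
  induction n generalizing K with
  | zero =>
    obtain ⟨d, hd⟩ := WithBot.ne_bot_iff_exists.1 (Module.supportDim_ne_bot_of_nontrivial R K)
    exact hd ▸ WithBot.coe_le_coe.2 zero_le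
  | succ n ih =>
    obtain ⟨x, hx, hxK⟩ := one_le_depth_iff.1 (le_trans (by simp) h)
    have := nontrivial_quotSMulTop_of_mem_maximalIdeal K hx
    rw [← Module.supportDim_quotSMulTop_succ_eq_supportDim hxK hx, Nat.cast_succ]
    gcongr
    exact ih _ ((succ_le_depth_iff hx hxK).1 h)

theorem depth_le_supportDim [IsNoetherianRing R] [Module.Finite R K] [Nontrivial K] :
    (depth R (.of R K) : WithBot ℕ∞) ≤ Module.supportDim R K := by
  have h (n : ℕ) := natCast_le_supportDim (R := R) n K
  obtain ⟨d, hd⟩ := WithBot.ne_bot_iff_exists.1 (Module.supportDim_ne_bot_of_nontrivial R K)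
  rw [← hd] at h ⊢
  exact WithBot.coe_le_coe.2 (ENat.forall_natCast_le_iff_le.1 fun n hn =>
    WithBot.coe_le_coe.1 (h n hn))

theorem depth_le_ringKrullDim [IsNoetherianRing R] :
    (depth R (.of R R) : WithBot ℕ∞) ≤ ringKrullDim R :=
  Module.supportDim_self_eq_ringKrullDim R ▸ depth_le_supportDim

theorem depth_self_ne_top [IsNoetherianRing R] : depth R (.of R R) ≠ ⊤ := by
  intro h
  have hdim := (depth_le_ringKrullDim (R := R)).trans_lt ringKrullDim_lt_top
  rw [h] at hdim
  exact hdim.false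

theorem IsTorsionFreeModule.depth_self_le [IsNoetherianRing R] [Module.Finite R M]
    (h : IsTorsionFreeModule R M) (hR : depth R (.of R R) ≤ 2) :
    depth R (.of R R) ≤ depth R (.of R M) + 1 := by
  by_cases h₁ : 1 ≤ depth R (.of R R)
  · obtain ⟨x, hx, hxR⟩ := one_le_depth_iff.1 h₁
    have hx₀ : x ∈ nonZeroDivisors R :=
      isRegular_iff_mem_nonZeroDivisors.1 (isLeftRegular_iff_isRegular.1 (isLeftRegular_iff.2 hxR))
    have hxM : IsSMulRegular M x := isSMulRegular_iff_right_eq_zero_of_smul.2 (h x hx₀)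
    exact hR.trans (add_le_add_left (one_le_depth_iff.2 ⟨x, hx, hxM⟩) 1)
  · exact (not_le.1 h₁).le.trans le_add_self

end Depth

section InjectiveDimension

namespace InjdimLE

theorem extVanish {n j : ℕ} {M : ModuleCat.{u} R} (h : InjdimLE R n M) (hj : n < j) :
    ExtVanish R A M j := by
  induction n generalizing M j with
  | zero =>
    have : Module.Injective R M := h
    obtain ⟨j, rfl⟩ := Nat.exists_eq_succ_of_ne_zero hj.ne'
    exact .of_injective
  | succ n ih =>
    obtain ⟨I, C, f, g, hI, hfg, hC⟩ := h
    obtain ⟨j, rfl⟩ := Nat.exists_eq_succ_of_ne_zero hj.ne_bot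
    exact hfg.extVanish_snd₁ (ih hC (by lia)) .of_injective

theorem of_extVanish_quotient {n : ℕ} {M : ModuleCat.{u} R}
    (h : ∀ I : Ideal R, ExtVanish R (R ⧸ I) M (n + 1)) : InjdimLE R n M := by
  induction n generalizing M with
  | zero =>
    refine Module.Baer.injective fun I g => ?_
    have hI : IsShortExact R I.subtype I.mkQ :=
      ⟨I.injective_subtype, I.mkQ_surjective, LinearMap.exact_subtype_mkQ I⟩
    obtain ⟨ψ, hψ⟩ := hI.exists_extension (h I) g
    exact ⟨ψ, fun x hx => LinearMap.congr_fun hψ ⟨x, hx⟩⟩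
  | succ n ih =>
    obtain ⟨I, _, f, _⟩ := (EnoughInjectives.presentation M).some
    have hI : Module.Injective R I := Module.injective_module_of_injective_object R I
    have hf := IsShortExact.of_injective ((ModuleCat.mono_iff_injective f).1 inferInstance)
    exact ⟨I, .of R _, f.hom, _, hI, hf, ih fun J => hf.extVanish_snd₃ .of_injective (h J)⟩

theorem mono {m n : ℕ} {M : ModuleCat.{u} R} (h : InjdimLE R m M) (hmn : m ≤ n) :
    InjdimLE R n M :=
  of_extVanish_quotient fun _ => h.extVanish (Nat.lt_succ_of_le hmn)

end InjdimLE

variable [IsNoetherianRing R] [IsLocalRing R]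

open IsLocalRing

theorem ExtVanish.of_quotSMulTop_fst [Module.Finite R K] [Module.Finite R M] {n : ℕ} {x : R}
    (hx : x ∈ maximalIdeal R) (hxK : IsSMulRegular K x)
    (h : ExtVanish R (QuotSMulTop x K) M (n + 1)) : ExtVanish R K M n := by
  refine .of_forall_exists_smul hx fun e => ?_
  obtain ⟨e', he'⟩ := Abelian.Ext.contravariant_sequence_exact₁
    (IsShortExact.lsmul hxK).shortExact _ e (Nat.add_comm 1 n) (extVanish_iff.1 h _)
  exact ⟨e', (mk₀_lsmul_comp x e').symm.trans he'⟩

theorem ExtVanish.of_quotSMulTop_snd [Module.Finite R K] [Module.Finite R M] {n : ℕ} {x : R}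
    (hx : x ∈ maximalIdeal R) (hxK : IsSMulRegular K x)
    (h : ExtVanish R M (QuotSMulTop x K) n) : ExtVanish R M K n := by
  refine .of_forall_exists_smul hx fun e => ?_
  obtain ⟨e', he'⟩ := Abelian.Ext.covariant_sequence_exact₂ _
    (IsShortExact.lsmul hxK).shortExact e (extVanish_iff.1 h _)
  exact ⟨e', (comp_mk₀_lsmul x e').symm.trans he'⟩

namespace InjdimLE

variable [Module.Finite R M]

theorem of_residueField {n : ℕ}
    (hk : ∀ j, n < j → ExtVanish R (R ⧸ maximalIdeal R) M j) : InjdimLE R n (.of R M) := by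
  have hP : IsExtensionClosed (R := R) fun N => ∀ j, n < j → ExtVanish R N M j :=
    ⟨fun A _ _ _ j _ => (ExtVanish.isExtensionClosed_fst M j).of_subsingleton A,
      fun h hA hC j hj => h.extVanish_fst₂ (hA j hj) (hC j hj)⟩
  refine of_extVanish_quotient fun I => hP.of_residueField hk ?_ (R ⧸ I) (n + 1) n.lt_succ_self
  intro N _ _ _ x hx hxN hq j hj
  exact .of_quotSMulTop_fst hx hxN (hq (j + 1) (by lia))

theorem of_extVanish_of_depth_eq_zero {a b : ℕ} (hM : InjdimLE R (a + b) (.of R M))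
    (hK : ¬ 1 ≤ depth R (.of R K)) (hKM : ∀ j, a < j → ExtVanish R K M j) :
    InjdimLE R a (.of R M) := by
  induction b with
  | zero => exact hM
  | succ b ih =>
    obtain ⟨φ, hφ⟩ : ∃ φ : R ⧸ maximalIdeal R →ₗ[R] K, φ ≠ 0 := by
      by_contra! h
      exact hK (le_depth_iff.2 (by simpa using extVanish_zero_iff.2 h))
    have : IsSimpleModule R (R ⧸ maximalIdeal R) :=
      isSimpleModule_iff_isCoatom.2 (maximalIdeal.isMaximal R).out
    have hsub := IsShortExact.of_injective ((LinearMap.injective_or_eq_zero φ).resolve_right hφ)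
    refine ih (of_residueField fun j hj => ?_)
    exact hsub.extVanish_fst₁ (hKM j (by lia)) (hM.extVanish (by lia))

theorem of_extVanish {a b n : ℕ} (hM : InjdimLE R b (.of R M)) (K : Type u) [AddCommGroup K]
    [Module R K] [Module.Finite R K] (hK : depth R (.of R K) ≤ n)
    (hKM : ∀ j, a < j → ExtVanish R K M j) : InjdimLE R (a + n) (.of R M) := by
  induction n generalizing K a with
  | zero =>
    have hK₀ : ¬ 1 ≤ depth R (.of R K) := by simp [nonpos_iff_eq_zero.1 hK]
    exact hM.mono le_add_self |>.of_extVanish_of_depth_eq_zero hK₀ hKM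
  | succ n ih =>
    by_cases h₁ : 1 ≤ depth R (.of R K)
    · obtain ⟨x, hx, hxK⟩ := one_le_depth_iff.1 h₁
      rw [← depth_quotSMulTop_add_one hx hxK, Nat.cast_succ,
        ENat.add_le_add_iff_right ENat.one_ne_top] at hK
      refine (ih (a := a + 1) _ hK fun j hj => ?_).mono (by lia)
      obtain ⟨j, rfl⟩ := Nat.exists_eq_succ_of_ne_zero hj.ne_bot
      exact (IsShortExact.lsmul hxK).extVanish_fst₃ (hKM j (by lia)) (hKM (j + 1) (by lia))
    · exact (hM.mono le_add_self |>.of_extVanish_of_depth_eq_zero h₁ hKM).mono le_self_add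

theorem of_depth_le {b n : ℕ} (hM : InjdimLE R b (.of R M)) (hR : depth R (.of R R) ≤ n) :
    InjdimLE R n (.of R M) := by
  refine zero_add n ▸ hM.of_extVanish R hR fun j hj => ?_
  obtain ⟨j, rfl⟩ := Nat.exists_eq_succ_of_ne_zero hj.ne'
  exact .of_projective

theorem extVanish_of_lt_add_depth {n t j : ℕ} (hM : InjdimLE R t (.of R M))
    (hj : t < j + n) (K : Type u) [AddCommGroup K] [Module R K] [Module.Finite R K]
    (hK : n ≤ depth R (.of R K)) : ExtVanish R K M j := by
  induction n generalizing K j with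
  | zero => exact hM.extVanish hj
  | succ n ih =>
    obtain ⟨x, hx, hxK⟩ := one_le_depth_iff.1 (le_trans (by simp) hK)
    exact .of_quotSMulTop_fst hx hxK (ih (by lia) _ ((succ_le_depth_iff hx hxK).1 hK))

end InjdimLE

end InjectiveDimension

section ReducingSequence

variable {s n a b : ℕ} {K L S : ModuleCat.{u} R}

theorem IsSyzygy.extVanish {j : ℕ} (h : IsSyzygy R n S K) (hK : ExtVanish R K M (n + (j + 1))) :
    ExtVanish R S M (j + 1) := by
  induction n generalizing K with
  | zero => exact (ExtVanish.isExtensionClosed_fst M _).congr h.some.symm (zero_add (j + 1) ▸ hK)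
  | succ n ih =>
    obtain ⟨W, F, f, g, _, _, hfg, hW⟩ := h
    rw [add_right_comm] at hK
    exact ih hW (hfg.extVanish_fst₁ .of_projective hK)

/-- The obstruction to extending `K^a → K → M` to `L` lies in
`Ext^1((Ω^n K)^b, M) = Ext^{n+1}(K, M)^b`. -/
theorem ReducingStep.nonempty_retract (h : ReducingStep R K L a b n) (ha : 1 ≤ a)
    (hK : ExtVanish R K M (n + 1)) (hr : Nonempty (Retract (.of R M) K)) :
    Nonempty (Retract (.of R M) L) := by
  obtain ⟨W, f, g, hW, hfg⟩ := h
  obtain ⟨ρ⟩ := hr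
  let i₀ : Fin a := ⟨0, ha⟩
  have hW₁ : ExtVanish R (Fin b → W) M 1 :=
    (ExtVanish.isExtensionClosed_fst M 1).pi (hW.extVanish (j := 0) hK) b
  obtain ⟨ψ, hψ⟩ := hfg.exists_extension hW₁ (ρ.r.hom ∘ₗ LinearMap.proj i₀)
  refine ⟨⟨ModuleCat.ofHom (f ∘ₗ LinearMap.single R _ i₀ ∘ₗ ρ.i.hom), ModuleCat.ofHom ψ, ?_⟩⟩
  ext m
  simpa using (LinearMap.congr_fun hψ _).trans (ConcreteCategory.congr_hom ρ.retract m)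

theorem exists_hasReducingSeq_of_reducingDim_ne_top {P : ModuleCat.{u} R → Prop}
    {M : ModuleCat.{u} R} (h : ReducingDim R P M ≠ ⊤) : ∃ r, HasReducingSeq R P M r := by
  by_contra! hr
  refine h (sInf_eq_top.2 ?_)
  rintro _ ⟨r, -, hM⟩
  exact absurd hM (hr r)

variable [IsLocalRing R]

theorem IsSyzygy.le_depth (h : IsSyzygy R n S K) (hR : s ≤ depth R (.of R R))
    (hK : s ≤ depth R K) : s ≤ depth R S := by
  induction n generalizing K with
  | zero => exact (isExtensionClosed_le_depth s).congr h.some.symm hK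
  | succ n ih =>
    obtain ⟨W, F, f, g, _, _, hfg, hW⟩ := h
    have hF := (isExtensionClosed_le_depth s).of_free (A := F) hR
    exact ih hW (hfg.le_depth₁ hF (le_add_right hK))

theorem ReducingStep.le_depth (h : ReducingStep R K L a b n) (hR : s ≤ depth R (.of R R))
    (hK : s ≤ depth R K) : s ≤ depth R L := by
  obtain ⟨W, f, g, hW, hfg⟩ := h
  have hP := isExtensionClosed_le_depth (R := R) s
  exact hP.extension hfg (hP.pi hK a) (hP.pi (hW.le_depth hR hK) b)

theorem HasReducingSeq.exists_retract [IsNoetherianRing R] [Module.Finite R M]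
    {P : ModuleCat.{u} R → Prop} {r : ℕ}
    (h : HasReducingSeq R P (.of R M) r) (hM : InjdimLE R (s + 1) (.of R M))
    (hR : s ≤ depth R (.of R R)) (hs : s ≤ depth R (.of R M)) :
    ∃ N, P N ∧ Nonempty (Retract (.of R M) N) := by
  obtain ⟨K, a, b, n, h₀, hfin, hstep, hP⟩ := h
  have key (i : Fin (r + 1)) : s ≤ depth R (K i) ∧ Nonempty (Retract (.of R M) (K i)) := by
    induction i using Fin.induction with
    | zero =>
      rw [h₀]
      exact ⟨hs, ⟨Retract.refl _⟩⟩
    | succ i ih =>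
      obtain ⟨ha, -, hn, hi⟩ := hstep i
      have := hfin i.castSucc
      exact ⟨hi.le_depth hR ih.1, hi.nonempty_retract ha
        (hM.extVanish_of_lt_add_depth (by lia) (K i.castSucc) ih.1) ih.2⟩
  exact ⟨_, hP, (key (Fin.last r)).2⟩

end ReducingSequence

section TotallyReflexive

namespace IsShortExact

variable {f : A →ₗ[R] B} {g : B →ₗ[R] C}

theorem dual (h : IsShortExact R f g) (hC : ExtVanish R C R 1) :
    IsShortExact R g.dualMap f.dualMap :=
  ⟨LinearMap.dualMap_injective_of_surjective h.2.1, h.exists_extension hC,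
    LinearMap.exact_lcomp_of_exact_of_surjective R h.2.2 h.2.1⟩

theorem bijective_eval₁ (h : IsShortExact R f g)
    (h' : IsShortExact R f.dualMap.dualMap g.dualMap.dualMap)
    (hB : Function.Bijective (Module.Dual.eval R B))
    (hC : Function.Bijective (Module.Dual.eval R C)) :
    Function.Bijective (Module.Dual.eval R A) :=
  LinearMap.bijective_of_bijective_of_injective_of_left_exact f g _ _ _ _ _
    (Module.Dual.eval_naturality f) (Module.Dual.eval_naturality g) h.2.2 h'.2.2 hB hC.1 h.1 h'.1

theorem bijective_eval₂ (h : IsShortExact R f g)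
    (h' : IsShortExact R f.dualMap.dualMap g.dualMap.dualMap)
    (hA : Function.Bijective (Module.Dual.eval R A))
    (hC : Function.Bijective (Module.Dual.eval R C)) :
    Function.Bijective (Module.Dual.eval R B) :=
  LinearMap.bijective_of_surjective_of_bijective_of_bijective_of_injective
    (0 : PUnit →ₗ[R] A) f g (0 : C →ₗ[R] PUnit) (0 : PUnit →ₗ[R] _) _ _ (0 : _ →ₗ[R] PUnit)
    0 _ _ _ 0 (by simp) (Module.Dual.eval_naturality f) (Module.Dual.eval_naturality g) (by simp)
    ((LinearMap.exact_zero_iff_injective _ _).2 h.1) h.2.2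
    ((LinearMap.exact_zero_iff_surjective _ _).2 h.2.1)
    ((LinearMap.exact_zero_iff_injective _ _).2 h'.1) h'.2.2
    ((LinearMap.exact_zero_iff_surjective _ _).2 h'.2.1)
    (Function.surjective_to_subsingleton _) hA hC (Function.injective_of_subsingleton _)

end IsShortExact

namespace IsTotallyReflexive

theorem of_free [Module.Free R A] [Module.Finite R A] : IsTotallyReflexive R A := by
  refine ⟨inferInstance, Module.bijective_dual_eval R A, fun i hi => ?_, fun i hi => ?_⟩
  all_goals
    obtain ⟨i, rfl⟩ := Nat.exists_eq_succ_of_ne_zero (Nat.one_le_iff_ne_zero.1 hi)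
    exact .of_projective

theorem dual [IsNoetherianRing R] (hX : IsTotallyReflexive R X) :
    IsTotallyReflexive R (Module.Dual R X) := by
  obtain ⟨hfin, heval, hExt, hExt'⟩ := hX
  let e := LinearEquiv.ofBijective _ heval
  refine ⟨inferInstance, ?_, hExt', fun i hi => ?_⟩
  · have he : (Module.Dual.eval R X).dualMap ∘ Module.Dual.eval R (Module.Dual R X) = id := rfl
    exact (Function.Bijective.of_comp_iff' e.dualMap.bijective _).1 (he ▸ Function.bijective_id)
  · exact (ExtVanish.isExtensionClosed_fst R i).congr e (hExt i hi)

variable {f : A →ₗ[R] B} {g : B →ₗ[R] C}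

theorem of_isShortExact₂ (h : IsShortExact R f g) (hA : IsTotallyReflexive R A)
    (hC : IsTotallyReflexive R C) : IsTotallyReflexive R B := by
  obtain ⟨hAfin, hAeval, hAext, hAext'⟩ := hA
  obtain ⟨hCfin, hCeval, hCext, hCext'⟩ := hC
  have h' := h.dual (hCext 1 le_rfl)
  exact ⟨h.finite_mid, h.bijective_eval₂ (h'.dual (hAext' 1 le_rfl)) hAeval hCeval,
    fun i hi => h.extVanish_fst₂ (hAext i hi) (hCext i hi),
    fun i hi => h'.extVanish_fst₂ (hCext' i hi) (hAext' i hi)⟩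

theorem of_isShortExact₁ [IsNoetherianRing R] (h : IsShortExact R f g)
    (hB : IsTotallyReflexive R B) (hC : IsTotallyReflexive R C) : IsTotallyReflexive R A := by
  obtain ⟨hBfin, hBeval, hBext, hBext'⟩ := hB
  obtain ⟨-, hCeval, hCext, hCext'⟩ := hC
  have h' := h.dual (hCext 1 le_rfl)
  have hAext' : ∀ i, 1 ≤ i → ExtVanish R (Module.Dual R A) R i := by
    rintro (_ | _ | i) hi
    · exact absurd hi (by simp)
    · refine h'.extVanish_one_of_exists_extension (hBext' 1 le_rfl) fun φ => ?_
      obtain ⟨c, rfl⟩ := hCeval.2 φ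
      obtain ⟨b, rfl⟩ := h.2.1 c
      exact ⟨Module.Dual.eval R B b, rfl⟩
    · exact h'.extVanish_fst₃ (hCext' (i + 1) (by lia)) (hBext' (i + 2) (by lia))
  exact ⟨Module.Finite.of_injective f h.1,
    h.bijective_eval₁ (h'.dual (hAext' 1 le_rfl)) hBeval hCeval,
    fun i hi => h.extVanish_fst₁ (hBext i hi) (hCext (i + 1) (by lia)), hAext'⟩

theorem exists_isShortExact [IsNoetherianRing R] (hX : IsTotallyReflexive R X) :
    ∃ (F C : ModuleCat.{u} R) (f : X →ₗ[R] F) (g : F →ₗ[R] C), Module.Free R F ∧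
      Module.Finite R F ∧ IsShortExact R f g ∧ IsTotallyReflexive R C := by
  have hD := hX.dual
  have := hX.dual.1
  obtain ⟨n, π, hπ⟩ := Module.Finite.exists_fin' R (Module.Dual R X)
  have hker := IsShortExact.of_surjective hπ
  have hL : IsTotallyReflexive R (LinearMap.ker π) := of_isShortExact₁ hker .of_free hD
  have hdual := hker.dual (hD.2.2.1 1 le_rfl)
  let e := LinearEquiv.ofBijective _ hX.2.1
  refine ⟨.of R (Module.Dual R (Fin n → R)), .of R (Module.Dual R (LinearMap.ker π)),
    π.dualMap ∘ₗ e, _, inferInstanceAs (Module.Free R (Module.Dual R (Fin n → R))),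
    inferInstanceAs (Module.Finite R (Module.Dual R (Fin n → R))),
    ⟨hdual.1.comp e.injective, hdual.2.1, fun y => ?_⟩, hL.dual⟩
  rw [hdual.2.2 y, LinearMap.coe_comp, LinearEquiv.coe_coe, e.surjective.range_comp]

/-- Shifting along `0 → X → F → C → 0` raises the degree until it exceeds the injective dimension
of `M`. -/
theorem extVanish [IsNoetherianRing R] {n j : ℕ} (hX : IsTotallyReflexive R X)
    (hM : InjdimLE R n (.of R M)) : ExtVanish R X M (j + 1) := by
  obtain ⟨m, hm⟩ : ∃ m, n < j + 1 + m := ⟨n, by lia⟩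
  induction m generalizing X j with
  | zero => exact hM.extVanish hm
  | succ m ih =>
    obtain ⟨F, C, f, g, _, _, hfg, hC⟩ := hX.exists_isShortExact
    exact hfg.extVanish_fst₁ .of_projective (ih hC (by lia))

end IsTotallyReflexive

end TotallyReflexive

section FiniteGorensteinDimension

namespace IsShortExact

theorem exists_factor {f : A →ₗ[R] B} {g : B →ₗ[R] C} (h : IsShortExact R f g) {θ : B →ₗ[R] M}
    (hθ : θ ∘ₗ f = 0) : ∃ q : C →ₗ[R] M, q ∘ₗ g = θ :=
  (LinearMap.exact_lcomp_of_exact_of_surjective M h.2.2 h.2.1 θ).1 hθ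

theorem prod_swap {f : K →ₗ[R] X} {a : K →ₗ[R] A} {i : X →ₗ[R] Y} {j : A →ₗ[R] Y}
    (h : IsShortExact R (f.prod a) (i.coprod j)) : IsShortExact R (a.prod f) (j.coprod i) := by
  have hswap (z : A × X) : j.coprod i z = i.coprod j z.swap := by simp [add_comm]
  refine ⟨fun k l hkl => h.1 (Prod.swap_injective hkl), fun y => ?_, fun z => ?_⟩
  · obtain ⟨z, rfl⟩ := h.2.1 y
    exact ⟨z.swap, hswap _⟩
  · rw [hswap, h.2.2]
    exact exists_congr fun k => ⟨fun hk => congrArg Prod.swap hk, fun hk => congrArg Prod.swap hk⟩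

theorem exists_of_prod_coprod {f : K →ₗ[R] X} {g : X →ₗ[R] N} {a : K →ₗ[R] A} {i : X →ₗ[R] Y}
    {j : A →ₗ[R] Y} (h : IsShortExact R f g) (hY : IsShortExact R (f.prod a) (i.coprod j)) :
    ∃ q : Y →ₗ[R] N, IsShortExact R j q := by
  obtain ⟨q, hq⟩ := hY.exists_factor (θ := g ∘ₗ LinearMap.fst R X A)
    h.2.2.linearMap_comp_eq_zero
  have hq' (x : X) (p : A) : q (i x + j p) = g x := LinearMap.congr_fun hq (x, p)
  have hrange (k : K) : i (f k) + j (a k) = 0 := (hY.2.2 (f k, a k)).2 ⟨k, rfl⟩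
  refine ⟨q, (injective_iff_map_eq_zero j).2 fun p hp => ?_, fun n => ?_,
    fun y => ⟨fun hy => ?_, ?_⟩⟩
  · obtain ⟨k, hk⟩ := (hY.2.2 (0, p)).1 (by simpa using hp)
    obtain ⟨hfk, rfl⟩ := Prod.mk.inj hk
    rw [h.1 (hfk.trans (map_zero f).symm), map_zero]
  · obtain ⟨x, rfl⟩ := h.2.1 n
    exact ⟨i x, by simpa using hq' x 0⟩
  · obtain ⟨⟨x, p⟩, rfl⟩ := hY.2.1 y
    obtain ⟨k, rfl⟩ := (h.2.2 x).1 ((hq' x p).symm.trans hy)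
    refine ⟨p - a k, ?_⟩
    rw [map_sub, LinearMap.coprod_apply, eq_neg_of_add_eq_zero_left (hrange k), sub_eq_neg_add]
  · rintro ⟨p, rfl⟩
    simpa using hq' 0 p

theorem exists_pushout {f : K →ₗ[R] X} {g : X →ₗ[R] N} {a : K →ₗ[R] A} {b : A →ₗ[R] C}
    (h : IsShortExact R f g) (h' : IsShortExact R a b) :
    ∃ (Y : ModuleCat.{u} R) (i : X →ₗ[R] Y) (p : Y →ₗ[R] C) (j : A →ₗ[R] Y) (q : Y →ₗ[R] N),
      IsShortExact R i p ∧ IsShortExact R j q := by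
  have hinj : Function.Injective (f.prod a) := fun k l hkl => h.1 (congrArg Prod.fst hkl)
  let π := (LinearMap.range (f.prod a)).mkQ
  have hY : IsShortExact R (f.prod a) ((π ∘ₗ .inl R X A).coprod (π ∘ₗ .inr R X A)) := by
    rw [← LinearMap.comp_coprod, LinearMap.coprod_inl_inr, LinearMap.comp_id]
    exact of_injective hinj
  obtain ⟨q, hq⟩ := h.exists_of_prod_coprod hY
  obtain ⟨p, hp⟩ := h'.exists_of_prod_coprod hY.prod_swap
  exact ⟨.of R _, _, p, _, q, hp, hq⟩

theorem exists_quotient_range_comp {f : A →ₗ[R] B} {g : B →ₗ[R] C} {i : B →ₗ[R] X}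
    {p : X →ₗ[R] Y} (h : IsShortExact R f g) (h' : IsShortExact R i p) :
    ∃ (j : C →ₗ[R] X ⧸ LinearMap.range (i ∘ₗ f)) (q : (X ⧸ LinearMap.range (i ∘ₗ f)) →ₗ[R] Y),
      IsShortExact R j q := by
  have hif := of_injective (f := i ∘ₗ f) (h'.1.comp h.1)
  obtain ⟨j, hj⟩ := h.exists_factor (θ := (LinearMap.range (i ∘ₗ f)).mkQ ∘ₗ i)
    hif.2.2.linearMap_comp_eq_zero
  obtain ⟨q, hq⟩ := hif.exists_factor (θ := p) <| by
    rw [← LinearMap.comp_assoc, h'.2.2.linearMap_comp_eq_zero, LinearMap.zero_comp]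
  have hjg (b : B) : j (g b) = (LinearMap.range (i ∘ₗ f)).mkQ (i b) := LinearMap.congr_fun hj b
  have hqm (x : X) : q ((LinearMap.range (i ∘ₗ f)).mkQ x) = p x := LinearMap.congr_fun hq x
  refine ⟨j, q, (injective_iff_map_eq_zero j).2 fun c hc => ?_, fun y => ?_,
    fun z => ⟨fun hz => ?_, ?_⟩⟩
  · obtain ⟨b, rfl⟩ := h.2.1 c
    obtain ⟨a, ha⟩ := (hif.2.2 (i b)).1 ((hjg b).symm.trans hc)
    exact (h.2.2 b).2 ⟨a, h'.1 ha⟩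
  · obtain ⟨x, rfl⟩ := h'.2.1 y
    exact ⟨_, hqm x⟩
  · obtain ⟨x, rfl⟩ := hif.2.1 z
    obtain ⟨b, rfl⟩ := (h'.2.2 x).1 ((hqm x).symm.trans hz)
    exact ⟨g b, hjg b⟩
  · rintro ⟨c, rfl⟩
    obtain ⟨b, rfl⟩ := h.2.1 c
    rw [hjg, hqm, h'.2.2.apply_apply_eq_zero]

end IsShortExact

/-- The hull of `N` in the Auslander–Buchweitz approximation of modules of finite Gorenstein
dimension. -/
theorem GdimLE.exists_isShortExact [IsNoetherianRing R] {m : ℕ} {N : ModuleCat.{u} R}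
    (hN : GdimLE R m N) : ∃ (P C : ModuleCat.{u} R) (f : N →ₗ[R] P) (g : P →ₗ[R] C) (l : ℕ),
      IsShortExact R f g ∧ IsTotallyReflexive R C ∧ HasProjectiveDimensionLT P l := by
  induction m generalizing N with
  | zero =>
    obtain ⟨F, C, f, g, _, _, hfg, hC⟩ := IsTotallyReflexive.exists_isShortExact hN
    exact ⟨F, C, f, g, 1, hfg, hC, inferInstance⟩
  | succ m ih =>
    obtain ⟨X, K, f, g, hX, hfg, hK⟩ := hN
    obtain ⟨P, C, a, b, l, hab, hC, hP⟩ := ih hK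
    obtain ⟨Y, i, p, j, q, hip, hjq⟩ := hfg.exists_pushout hab
    have hY : IsTotallyReflexive R Y := .of_isShortExact₂ hip hX hC
    obtain ⟨F, D, s, t, _, _, hst, hD⟩ := hY.exists_isShortExact
    obtain ⟨u, v, huv⟩ := hjq.exists_quotient_range_comp hst
    have hF := IsShortExact.of_injective (f := s ∘ₗ j) (hst.1.comp hjq.1)
    have hFpd : HasProjectiveDimensionLT F (l + 1) := hasProjectiveDimensionLT_of_ge F 1 _ (by lia)
    exact ⟨.of R _, D, u, v, l + 1, huv, hD, hF.shortExact.hasProjectiveDimensionLT_X₃ l hP hFpd⟩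

theorem GdimLE.exists_hasProjectiveDimensionLT [IsNoetherianRing R] {m t : ℕ}
    {N : ModuleCat.{u} R} (hN : GdimLE R m N) (hM : InjdimLE R t (.of R M))
    (hr : Nonempty (Retract (.of R M) N)) :
    ∃ l, HasProjectiveDimensionLT (ModuleCat.of R M) l := by
  obtain ⟨P, C, f, g, l, hfg, hC, hP⟩ := hN.exists_isShortExact
  obtain ⟨ρ⟩ := hr
  obtain ⟨ψ, hψ⟩ := hfg.exists_extension (hC.extVanish hM) ρ.r.hom
  have hψM : (ρ.i ≫ ModuleCat.ofHom f) ≫ ModuleCat.ofHom ψ = 𝟙 (ModuleCat.of R M) := by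
    rw [Category.assoc, ← ModuleCat.ofHom_comp, hψ, ModuleCat.ofHom_hom, ρ.retract]
  exact ⟨l, (Retract.mk _ _ hψM).hasProjectiveDimensionLT l⟩

end FiniteGorensteinDimension

section ProjectiveDimension

open IsLocalRing

theorem comp_mk₀_eq_zero [Module.Free R A] [Module.Finite R A] {φ : A →ₗ[R] R}
    (hφ : ∀ a, φ a ∈ Module.annihilator R K) {n : ℕ}
    (e : Abelian.Ext (ModuleCat.of R K) (ModuleCat.of R A) n) :
    e.comp (Abelian.Ext.mk₀ (ModuleCat.ofHom φ)) (add_zero n) = 0 := by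
  let β := Module.Free.chooseBasis R A
  have hsum : ModuleCat.ofHom φ = ∑ i, φ (β i) • ModuleCat.ofHom (β.coord i) := by
    ext a
    simp only [ModuleCat.hom_sum, ModuleCat.hom_smul, ModuleCat.hom_ofHom, LinearMap.sum_apply,
      LinearMap.smul_apply, smul_eq_mul]
    conv_lhs => rw [← β.sum_repr a, map_sum]
    simp [mul_comm]
  rw [hsum, Abelian.Ext.mk₀_sum, Abelian.Ext.comp_sum]
  refine Finset.sum_eq_zero fun i _ => ?_
  rw [Abelian.Ext.mk₀_smul, Abelian.Ext.comp_smul, smul_ext_eq_zero (hφ (β i))]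

theorem IsShortExact.extVanish_self_of_apply_eq_one {f : A →ₗ[R] B} {g : B →ₗ[R] C}
    (h : IsShortExact R f g) [Module.Free R A] [Module.Finite R A] {φ : B →ₗ[R] R} {b : B}
    (hb : φ b = 1) (hφ : ∀ a, φ (f a) ∈ Module.annihilator R K) {n : ℕ} (hC : ExtVanish R K C n) :
    ExtVanish R K R n := by
  refine extVanish_iff.2 fun e => ?_
  let ι := Abelian.Ext.mk₀ (ModuleCat.ofHom (LinearMap.toSpanSingleton R B b))
  obtain ⟨e', he'⟩ := Abelian.Ext.covariant_sequence_exact₂ _ h.shortExact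
    (e.comp ι (add_zero n)) (extVanish_iff.1 hC _)
  have hsplit : ModuleCat.ofHom (LinearMap.toSpanSingleton R B b) ≫ ModuleCat.ofHom φ =
      𝟙 (ModuleCat.of R R) := by
    ext
    simpa using hb
  calc e = (e.comp ι (add_zero n)).comp (Abelian.Ext.mk₀ (ModuleCat.ofHom φ)) (add_zero n) := by
        rw [Abelian.Ext.comp_assoc_of_third_deg_zero, Abelian.Ext.mk₀_comp_mk₀, hsplit,
          Abelian.Ext.comp_mk₀_id]
    _ = e'.comp (Abelian.Ext.mk₀ (ModuleCat.ofHom (φ ∘ₗ f))) (add_zero n) := by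
        rw [← he', Abelian.Ext.comp_assoc_of_third_deg_zero, Abelian.Ext.mk₀_comp_mk₀]
        rfl
    _ = 0 := comp_mk₀_eq_zero hφ e'

theorem exists_surjective_residueField (R M : Type u) [CommRing R] [IsLocalRing R]
    [AddCommGroup M] [Module R M] [Module.Finite R M] [Nontrivial M] :
    ∃ l : M →ₗ[R] R ⧸ maximalIdeal R, Function.Surjective l := by
  obtain ⟨N, hN, -⟩ := (eq_top_or_exists_le_coatom (⊥ : Submodule R M)).resolve_left bot_ne_top
  obtain ⟨I, hI, ⟨e⟩⟩ := isSimpleModule_iff_quot_maximal.1 (isSimpleModule_iff_isCoatom.2 hN)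
  obtain rfl := eq_maximalIdeal hI
  exact ⟨e.toLinearMap ∘ₗ N.mkQ, e.surjective.comp N.mkQ_surjective⟩

variable [IsLocalRing R] [Module.Finite R M]

theorem exists_dual_apply_eq_one [Nontrivial M] [Module.Projective R B] {π : B →ₗ[R] M}
    (hπ : Function.Surjective π) : ∃ (φ : B →ₗ[R] R) (b : B), φ b = 1 ∧
      ∀ a, π a = 0 → φ a ∈ maximalIdeal R := by
  obtain ⟨l, hl⟩ := exists_surjective_residueField R M
  obtain ⟨φ, hφ⟩ := Module.projective_lifting_property (maximalIdeal R).mkQ (l ∘ₗ π)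
    (Submodule.mkQ_surjective _)
  have hφ' (b : B) : φ b ∈ maximalIdeal R ↔ l (π b) = 0 := by
    rw [← LinearMap.comp_apply l π, ← hφ, LinearMap.comp_apply, Submodule.mkQ_apply,
      Submodule.Quotient.mk_eq_zero]
  obtain ⟨b, hb⟩ := (hl.comp hπ) 1
  have hu : IsUnit (φ b) := by
    rw [← notMem_maximalIdeal, hφ']
    exact fun h => one_ne_zero (hb.symm.trans h)
  obtain ⟨c, hc⟩ := hu.exists_left_inv
  exact ⟨φ, c • b, by rw [map_smul, smul_eq_mul, hc],
    fun a ha => (hφ' a).2 (by rw [ha, map_zero])⟩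

variable [IsNoetherianRing R]

theorem hasProjectiveDimensionLT_of_residueField {n : ℕ}
    (hk : ExtVanish R M (R ⧸ maximalIdeal R) n) :
    HasProjectiveDimensionLT (ModuleCat.of R M) n :=
  ModuleCat.hasProjectiveDimensionLT_of_forall_finite _ n fun N _ =>
    subsingleton_of_forall_eq 0 <| extVanish_iff.1 <|
      (ExtVanish.isExtensionClosed_snd M n).of_residueField hk
        (fun _ _ _ _ _ hx hxK => .of_quotSMulTop_snd hx hxK) N

variable [Nontrivial M]

theorem hasProjectiveDimensionLT_of_succ {n : ℕ}
    [HasProjectiveDimensionLT (ModuleCat.of R M) (n + 1)] (h : ExtVanish R M M n) :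
    HasProjectiveDimensionLT (ModuleCat.of R M) n := by
  obtain ⟨l, hl⟩ := exists_surjective_residueField R M
  refine hasProjectiveDimensionLT_of_residueField
    ((IsShortExact.of_surjective hl).extVanish_snd₃ h (extVanish_iff.2 fun e => ?_))
  exact e.eq_zero_of_hasProjectiveDimensionLT (n + 1) le_rfl

theorem hasProjectiveDimensionLT_of_extVanish_self {n m : ℕ}
    (hm : HasProjectiveDimensionLT (ModuleCat.of R M) m) (h : ∀ j, n ≤ j → ExtVanish R M M j) :
    HasProjectiveDimensionLT (ModuleCat.of R M) n := by
  obtain hmn | hnm := le_total m n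
  · exact hasProjectiveDimensionLT_of_ge _ m n hmn
  · induction m, hnm using Nat.le_induction with
    | base => exact hm
    | succ m hnm ih => exact ih (hasProjectiveDimensionLT_of_succ (h m hnm))

theorem InjdimLE.self_of_hasProjectiveDimensionLT_two {t : ℕ} (hM : InjdimLE R t (.of R M))
    [HasProjectiveDimensionLT (ModuleCat.of R M) 2] : InjdimLE R t (.of R R) := by
  obtain ⟨n, π, hπ⟩ := Module.Finite.exists_fin' R M
  have h := IsShortExact.of_surjective hπ
  have hproj : Projective (ModuleCat.of R (LinearMap.ker π)) :=
    projective_iff_hasProjectiveDimensionLT_one.2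
      (h.shortExact.hasProjectiveDimensionLT_X₁ 1 inferInstance inferInstance)
  have : Module.Projective R (LinearMap.ker π) := (IsProjective.iff_projective _).2 hproj
  have : Module.Free R (LinearMap.ker π) := Module.free_of_flat_of_isLocalRing
  obtain ⟨φ, b, hb, hφ⟩ := exists_dual_apply_eq_one hπ
  refine .of_residueField fun j hj =>
    h.extVanish_self_of_apply_eq_one hb (fun a => ?_) (hM.extVanish hj)
  rw [Ideal.annihilator_quotient]
  exact hφ a a.2

end ProjectiveDimension

end Development

theorem stmt6_general (R : Type u) [CommRing R] [IsNoetherianRing R] [IsLocalRing R]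
    (M : Type u) [AddCommGroup M] [Module R M] [Module.Finite R M] [Nontrivial M]
    (hdepth : depth R (ModuleCat.of R R) ≤ depth R (ModuleCat.of R M) + 1)
    (hinj : ∃ n : ℕ, InjdimLE R n (ModuleCat.of R M))
    (hr : rGdim R (ModuleCat.of R M) ≠ ⊤) :
    IsGorensteinRing R := by
  obtain ⟨t, ht⟩ := ENat.ne_top_iff_exists.1 (depth_self_ne_top (R := R))
  obtain ⟨b, hb⟩ := hinj
  have hM : InjdimLE R t (.of R M) := hb.of_depth_le ht.ge
  have hs : ((t - 1 : ℕ) : ℕ∞) ≤ depth R (.of R M) := by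
    rw [ENat.natCast_sub]
    exact tsub_le_iff_right.2 (ht ▸ hdepth)
  obtain ⟨r, hr⟩ := exists_hasReducingSeq_of_reducingDim_ne_top hr
  obtain ⟨N, ⟨m, hN⟩, hMN⟩ := hr.exists_retract (hM.mono le_tsub_add)
    (ht ▸ Nat.cast_le.2 (t.sub_le 1)) hs
  obtain ⟨l, hl⟩ := hN.exists_hasProjectiveDimensionLT hM hMN
  have : HasProjectiveDimensionLT (ModuleCat.of R M) 2 :=
    hasProjectiveDimensionLT_of_extVanish_self hl fun j hj =>
      hM.extVanish_of_lt_add_depth (by lia) M hs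
  exact ⟨t, hM.self_of_hasProjectiveDimensionLT_two⟩

theorem stmt6 (R : Type u) [CommRing R] [IsNoetherianRing R] [IsLocalRing R]
    (hd : ringKrullDim R = 2)
    (M : Type u) [AddCommGroup M] [Module R M] [Module.Finite R M] [Nontrivial M]
    (htf : IsTorsionFreeModule R M)
    (hinj : ∃ n : ℕ, InjdimLE R n (ModuleCat.of R M))
    (hr : rGdim R (ModuleCat.of R M) ≠ ⊤) :
    IsGorensteinRing R := by
  have hR : depth R (ModuleCat.of R R) ≤ 2 :=
    WithBot.coe_le_coe.1 (depth_le_ringKrullDim.trans_eq hd)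
  exact stmt6_general R M (htf.depth_self_le hR) hinj hr
end

section
/- Let R be a commutative Noetherian local ring with maximal ideal m, let M be a finitely generated R-module, and let x ∈ m be a non zero-divisor on both R and M. Then the reducing Gorenstein dimension of the R/xR-module M/xM is at most the reducing Gorenstein dimension of the R-module M. -/
/-!
Reduction modulo `x` preserves a short exact sequence whose right-hand term is `x`-regular. The
terms `K_i` of a reducing sequence, their syzygies and the totally reflexive modules resolving
`K_r` are all `x`-regular, so the whole sequence can be reduced modulo `x`, provided that
`X/xX` is totally reflexive over `R/x` whenever `X` is totally reflexive over `R`.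

For an `x`-regular module `X`, reducing a free resolution shows that `Ext^i_{R/x}(X/xX, Z)` and
`Ext^i_R(X, Z)` vanish together for every `R/x`-module `Z`. With `Z = R/x`, the sequence
`0 → R → R → R/x → 0` yields the vanishing over `R/x` from that of `Ext_R(X, R)`. The same
sequence identifies `X^*/xX^*` with `(X/xX)^*`, and under this identification the evaluation map
of `X/xX` is the reduction of that of `X`.
-/

open CategoryTheory Pointwise

universe u

variable (R : Type u) [CommRing R]

section

variable {R}

section ShortExact

variable {A B C A' C' : Type u} [AddCommGroup A] [Module R A] [AddCommGroup B] [Module R B]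
  [AddCommGroup C] [Module R C] [AddCommGroup A'] [Module R A'] [AddCommGroup C'] [Module R C']
  {f : A →ₗ[R] B} {g : B →ₗ[R] C}

lemma IsShortExact.comp_linearEquiv (h : IsShortExact R f g) (e : A' ≃ₗ[R] A) (e' : C ≃ₗ[R] C') :
    IsShortExact R (f ∘ₗ e.toLinearMap) (e'.toLinearMap ∘ₗ g) :=
  ⟨h.1.comp e.injective, e'.surjective.comp h.2.1,
    e'.injective.comp_exact_iff_exact.mpr (e.surjective.comp_exact_iff_exact.mpr h.2.2)⟩

lemma IsShortExact.isSMulRegular {x : R} (h : IsShortExact R f g) (hA : IsSMulRegular A x)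
    (hC : IsSMulRegular C x) : IsSMulRegular B x :=
  isSMulRegular_of_range_eq_ker h.1 h.2.2.linearMap_ker_eq.symm hA hC

/-- The short complex of module categories underlying an elementwise short exact sequence; it
gives access to the long exact sequences of `Ext`. -/
abbrev IsShortExact.shortComplex_s9 (h : IsShortExact R f g) : ShortComplex (ModuleCat.{u} R) :=
  ModuleCat.shortComplexOfCompEqZero f g h.2.2.linearMap_comp_eq_zero

lemma IsShortExact.shortExact_shortComplex (h : IsShortExact R f g) :
    h.shortComplex_s9.ShortExact :=
  ModuleCat.shortComplex_shortExact _ h.2.2 h.1 h.2.1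

lemma exists_isShortExact_free (X : Type u) [AddCommGroup X] [Module R X] :
    ∃ (K F : ModuleCat.{u} R) (f : K →ₗ[R] F) (g : F →ₗ[R] X),
      Module.Free R F ∧ IsShortExact R f g := by
  let g : (X →₀ R) →ₗ[R] X := Finsupp.linearCombination R id
  exact ⟨ModuleCat.of R (LinearMap.ker g), ModuleCat.of R (X →₀ R), (LinearMap.ker g).subtype, g,
    inferInstanceAs (Module.Free R (X →₀ R)), Subtype.val_injective,
    Finsupp.linearCombination_id_surjective R X, LinearMap.exact_subtype_ker_map g⟩

lemma isShortExact_lsmul_mkQ_span_singleton {x : R} (hx : IsSMulRegular R x) :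
    IsShortExact R (LinearMap.lsmul R R x) (Ideal.span {x}).mkQ := by
  refine ⟨hx, Submodule.mkQ_surjective _, fun r => ?_⟩
  rw [Submodule.mkQ_apply, Submodule.Quotient.mk_eq_zero, Ideal.mem_span_singleton']
  exact exists_congr fun a => by rw [LinearMap.lsmul_apply, smul_eq_mul, mul_comm]

lemma IsShortExact.exists_comp_eq_of_comp_eq_zero {X : Type u} [AddCommGroup X] [Module R X]
    (h : IsShortExact R f g) {φ : X →ₗ[R] B} (hφ : g ∘ₗ φ = 0) :
    ∃ ψ : X →ₗ[R] A, f ∘ₗ ψ = φ := by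
  have hmem (a : X) : φ a ∈ LinearMap.range f := (h.2.2 (φ a)).mp (LinearMap.congr_fun hφ a)
  refine ⟨(LinearEquiv.ofInjective f h.1).symm.toLinearMap ∘ₗ φ.codRestrict _ hmem,
    LinearMap.ext fun a => ?_⟩
  exact congrArg Subtype.val ((LinearEquiv.ofInjective f h.1).apply_symm_apply ⟨φ a, hmem a⟩)

end ShortExact

section ExtVanish

lemma subsingleton_ext_succ_iff {C : Type*} [Category* C] [Abelian C] [HasExt C] {X Y : C}
    (P : ProjectiveResolution X) (n : ℕ) :
    Subsingleton (Abelian.Ext X Y (n + 1)) ↔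
      ∀ f : P.complex.X (n + 1) ⟶ Y, P.complex.d (n + 2) (n + 1) ≫ f = 0 →
        ∃ g : P.complex.X n ⟶ Y, P.complex.d (n + 1) n ≫ g = f := by
  constructor
  · intro _ f hf
    exact (P.extMk_eq_zero_iff f (n + 2) rfl hf n rfl).mp (Subsingleton.elim _ _)
  · intro h
    refine subsingleton_of_forall_eq 0 fun α => ?_
    obtain ⟨f, hf, rfl⟩ := P.extMk_surjective α (n + 2) rfl
    exact (P.extMk_eq_zero_iff f (n + 2) rfl hf n rfl).mpr (h f hf)

variable {X X' Y Y' Y'' : Type u} [AddCommGroup X] [Module R X] [AddCommGroup X'] [Module R X']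
  [AddCommGroup Y] [Module R Y] [AddCommGroup Y'] [Module R Y'] [AddCommGroup Y''] [Module R Y'']

lemma extVanish_succ_iff_of_projectiveResolution
    (P : ProjectiveResolution (ModuleCat.of R X)) (n : ℕ) :
    ExtVanish R X Y (n + 1) ↔
      ∀ f : P.complex.X (n + 1) ⟶ ModuleCat.of R Y, P.complex.d (n + 2) (n + 1) ≫ f = 0 →
        ∃ g : P.complex.X n ⟶ ModuleCat.of R Y, P.complex.d (n + 1) n ≫ g = f := by
  have e := (P.isoExt (R := R) (n + 1) (ModuleCat.of R Y)).toLinearEquiv.toEquiv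
  rw [ExtVanish, e.subsingleton_congr, ← ModuleCat.isZero_iff_subsingleton,
    ← HomologicalComplex.exactAt_iff_isZero_homology,
    HomologicalComplex.exactAt_iff' _ n (n + 1) (n + 2) (by simp) (by simp),
    ShortComplex.moduleCat_exact_iff]
  rfl

lemma extVanish_succ_iff_subsingleton_ext (n : ℕ) :
    ExtVanish R X Y (n + 1) ↔
      Subsingleton (Abelian.Ext (ModuleCat.of R X) (ModuleCat.of R Y) (n + 1)) :=
  let P := ProjectiveResolution.of (ModuleCat.of R X)
  (extVanish_succ_iff_of_projectiveResolution P n).trans (subsingleton_ext_succ_iff P n).symm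

lemma ExtVanish.of_linearEquiv {n : ℕ} (h : ExtVanish R X Y n) (e : X ≃ₗ[R] X') :
    ExtVanish R X' Y n :=
  let i := ((Ext R (ModuleCat.{u} R) n).mapIso e.symm.toModuleIso.op).app (ModuleCat.of R Y)
  i.toLinearEquiv.toEquiv.subsingleton_congr.mp h

section Covariant

variable {f : Y →ₗ[R] Y'} {g : Y' →ₗ[R] Y''}

lemma ExtVanish.of_isShortExact_right (h : IsShortExact R f g) {n : ℕ}
    (hY' : ExtVanish R X Y' (n + 1)) (hY : ExtVanish R X Y (n + 2)) :
    ExtVanish R X Y'' (n + 1) := by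
  rw [extVanish_succ_iff_subsingleton_ext] at hY hY' ⊢
  refine subsingleton_of_forall_eq 0 fun α => ?_
  obtain ⟨β, rfl⟩ := Abelian.Ext.covariant_sequence_exact₃ _ h.shortExact_shortComplex α rfl
    (hY.elim _ _)
  rw [hY'.elim β 0, Abelian.Ext.zero_comp]

lemma ExtVanish.exists_comp_eq (h : IsShortExact R f g) (hY : ExtVanish R X Y 1)
    (φ : X →ₗ[R] Y'') : ∃ ψ : X →ₗ[R] Y', g ∘ₗ ψ = φ := by
  rw [extVanish_succ_iff_subsingleton_ext] at hY
  obtain ⟨β, hβ⟩ := Abelian.Ext.covariant_sequence_exact₃ _ h.shortExact_shortComplex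
    (Abelian.Ext.mk₀ (ModuleCat.ofHom φ)) rfl (hY.elim _ _)
  obtain ⟨ψ, rfl⟩ := (Abelian.Ext.mk₀_bijective _ _).2 β
  rw [Abelian.Ext.mk₀_comp_mk₀] at hβ
  exact ⟨ψ.hom, congrArg ModuleCat.Hom.hom ((Abelian.Ext.mk₀_bijective _ _).1 hβ)⟩

end Covariant

section Contravariant

variable {K F : Type u} [AddCommGroup K] [Module R K] [AddCommGroup F] [Module R F]
  [Module.Projective R F] {f : K →ₗ[R] F} {g : F →ₗ[R] X}

lemma IsShortExact.extVanish_add_two_iff (h : IsShortExact R f g) (n : ℕ) :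
    ExtVanish R X Y (n + 2) ↔ ExtVanish R K Y (n + 1) := by
  have : Projective (ModuleCat.of R F) := inferInstance
  rw [extVanish_succ_iff_subsingleton_ext, extVanish_succ_iff_subsingleton_ext]
  constructor
  · intro hX
    refine subsingleton_of_forall_eq 0 fun α => ?_
    obtain ⟨β, rfl⟩ := Abelian.Ext.contravariant_sequence_exact₁ h.shortExact_shortComplex _ α
      (add_comm 1 _) (hX.elim _ _)
    rw [Abelian.Ext.eq_zero_of_projective (P := ModuleCat.of R F) β, Abelian.Ext.comp_zero]
  · intro hK
    refine subsingleton_of_forall_eq 0 fun α => ?_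
    obtain ⟨β, rfl⟩ := Abelian.Ext.contravariant_sequence_exact₃ h.shortExact_shortComplex _ α
      (Abelian.Ext.eq_zero_of_projective (P := ModuleCat.of R F) _) (add_comm 1 _)
    rw [hK.elim β 0, Abelian.Ext.comp_zero]

lemma IsShortExact.extVanish_one_iff (h : IsShortExact R f g) :
    ExtVanish R X Y 1 ↔ ∀ φ : K →ₗ[R] Y, ∃ ψ : F →ₗ[R] Y, ψ ∘ₗ f = φ := by
  have : Projective (ModuleCat.of R F) := inferInstance
  have hS := h.shortExact_shortComplex
  rw [extVanish_succ_iff_subsingleton_ext]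
  constructor
  · intro hX φ
    obtain ⟨β, hβ⟩ := Abelian.Ext.contravariant_sequence_exact₁ hS _
      (Abelian.Ext.mk₀ (ModuleCat.ofHom φ)) (add_zero 1) (hX.elim _ _)
    obtain ⟨ψ, rfl⟩ := (Abelian.Ext.mk₀_bijective _ _).2 β
    rw [Abelian.Ext.mk₀_comp_mk₀] at hβ
    exact ⟨ψ.hom, congrArg ModuleCat.Hom.hom ((Abelian.Ext.mk₀_bijective _ _).1 hβ)⟩
  · intro hext
    refine subsingleton_of_forall_eq 0 fun α => ?_
    obtain ⟨β, rfl⟩ := Abelian.Ext.contravariant_sequence_exact₃ hS _ α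
      (Abelian.Ext.eq_zero_of_projective (P := ModuleCat.of R F) _) (add_zero 1)
    obtain ⟨φ, rfl⟩ := (Abelian.Ext.mk₀_bijective _ _).2 β
    obtain ⟨ψ, hψ⟩ := hext φ.hom
    have hφ : φ = h.shortComplex_s9.f ≫ ModuleCat.ofHom ψ := ModuleCat.hom_ext hψ.symm
    rw [hφ, ← Abelian.Ext.mk₀_comp_mk₀]
    exact hS.extClass_comp_assoc _

end Contravariant

end ExtVanish

section Reduction

variable {A B C : Type u} [AddCommGroup A] [Module R A] [AddCommGroup B] [Module R B]
  [AddCommGroup C] [Module R C]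

/-- The map `A/xA → B/xB` induced by `f : A → B`, as an `R/x`-linear map
(`QuotSMulTop.map` is only `R`-linear). -/
noncomputable def quotSMulTopMap (x : R) (f : A →ₗ[R] B) :
    QuotSMulTop x A →ₗ[R ⧸ Ideal.span {x}] QuotSMulTop x B :=
  (QuotSMulTop.map x f).extendScalarsOfSurjective Ideal.Quotient.mk_surjective

/-- The isomorphism `A/xA ≃ B/xB` induced by an isomorphism `A ≃ B`, as an `R/x`-linear map
(`QuotSMulTop.congr` is only `R`-linear). -/
noncomputable def quotSMulTopCongr (x : R) (e : A ≃ₗ[R] B) :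
    QuotSMulTop x A ≃ₗ[R ⧸ Ideal.span {x}] QuotSMulTop x B :=
  (QuotSMulTop.congr x e).extendScalarsOfSurjective Ideal.Quotient.mk_surjective

lemma smul_top_pi {ι : Type*} (M : ι → Type*) [∀ i, AddCommGroup (M i)] [∀ i, Module R (M i)]
    (x : R) : x • (⊤ : Submodule R (∀ i, M i)) = Submodule.pi Set.univ fun _ => x • ⊤ := by
  ext v
  simp only [Submodule.mem_pi, Submodule.mem_smul_pointwise_iff_exists, Submodule.mem_top,
    true_and, Set.mem_univ, forall_const, Classical.skolem, funext_iff, Pi.smul_apply]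

/-- Reduction modulo `x` commutes with finite products. -/
noncomputable def quotSMulTopPiEquiv {ι : Type*} [Fintype ι] [DecidableEq ι] (M : ι → Type*)
    [∀ i, AddCommGroup (M i)] [∀ i, Module R (M i)] (x : R) :
    QuotSMulTop x (∀ i, M i) ≃ₗ[R ⧸ Ideal.span {x}] ∀ i, QuotSMulTop x (M i) :=
  ((Submodule.quotEquivOfEq _ _ (smul_top_pi M x)).trans
    (Submodule.quotientPi _)).extendScalarsOfSurjective Ideal.Quotient.mk_surjective

lemma finite_quotSMulTop (x : R) (M : Type*) [AddCommGroup M] [Module R M] [Module.Finite R M] :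
    Module.Finite (R ⧸ Ideal.span {x}) (QuotSMulTop x M) :=
  Module.Finite.of_restrictScalars_finite R _ _

variable {x : R}

lemma isSMulRegular_of_flat (hx : IsSMulRegular R x) (F : Type*) [AddCommGroup F] [Module R F]
    [Module.Flat R F] : IsSMulRegular F x :=
  Module.Flat.isSMulRegular_of_isRegular (isLeftRegular_iff_isRegular.mp hx)

lemma isSMulRegular_linearMap {M N : Type*} [AddCommGroup M] [Module R M] [AddCommGroup N]
    [Module R N] (hN : IsSMulRegular N x) : IsSMulRegular (M →ₗ[R] N) x :=
  fun _ _ h => LinearMap.ext fun a => hN (LinearMap.congr_fun h a)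

lemma IsShortExact.quotSMulTop {f : A →ₗ[R] B} {g : B →ₗ[R] C} (h : IsShortExact R f g)
    (hC : IsSMulRegular C x) :
    IsShortExact (R ⧸ Ideal.span {x}) (quotSMulTopMap x f) (quotSMulTopMap x g) := by
  refine ⟨?_, QuotSMulTop.map_surjective x h.2.1, QuotSMulTop.map_exact x h.2.2 h.2.1⟩
  have h0 := QuotSMulTop.map_first_exact_on_four_term_exact_of_isSMulRegular_last
    ((LinearMap.exact_zero_iff_injective A f).mpr h.1) h.2.2 hC
  rw [map_zero] at h0
  exact (LinearMap.exact_zero_iff_injective (QuotSMulTop x A) (QuotSMulTop.map x f)).mp h0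

/-- The adjunction between reduction modulo `x` and restriction of scalars along `R → R/x`. -/
noncomputable def quotSMulTopHomEquiv (x : R) (M Z : Type*) [AddCommGroup M] [Module R M]
    [AddCommGroup Z] [Module R Z] [Module (R ⧸ Ideal.span {x}) Z]
    [IsScalarTower R (R ⧸ Ideal.span {x}) Z] :
    (QuotSMulTop x M →ₗ[R ⧸ Ideal.span {x}] Z) ≃ₗ[R] (M →ₗ[R] Z) where
  toFun φ := φ.restrictScalars R ∘ₗ (x • (⊤ : Submodule R M)).mkQ
  invFun ψ := LinearMap.extendScalarsOfSurjective Ideal.Quotient.mk_surjective <|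
    (x • (⊤ : Submodule R M)).liftQ ψ <| by
      rintro _ ⟨a, -, rfl⟩
      have hx : algebraMap R (R ⧸ Ideal.span {x}) x = 0 :=
        Ideal.Quotient.eq_zero_iff_mem.mpr (Ideal.mem_span_singleton_self x)
      change ψ (x • a) = 0
      rw [map_smul, ← algebraMap_smul (R ⧸ Ideal.span {x}) x, hx, zero_smul]
  map_add' _ _ := rfl
  map_smul' _ _ := rfl
  left_inv φ := LinearMap.ext <| (Submodule.mkQ_surjective _).forall.mpr fun _ => rfl
  right_inv _ := rfl

end Reduction

section ChangeOfRings

variable {x : R} {X Z : Type u} [AddCommGroup X] [Module R X] [AddCommGroup Z] [Module R Z]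
  [Module (R ⧸ Ideal.span {x}) Z] [IsScalarTower R (R ⧸ Ideal.span {x}) Z]

lemma forall_exists_comp_quotSMulTopMap_eq_iff {K F : Type u} [AddCommGroup K] [Module R K]
    [AddCommGroup F] [Module R F] (f : K →ₗ[R] F) :
    (∀ φ : QuotSMulTop x K →ₗ[R ⧸ Ideal.span {x}] Z,
        ∃ ψ : QuotSMulTop x F →ₗ[R ⧸ Ideal.span {x}] Z, ψ ∘ₗ quotSMulTopMap x f = φ) ↔
      ∀ φ : K →ₗ[R] Z, ∃ ψ : F →ₗ[R] Z, ψ ∘ₗ f = φ := by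
  have hcomp (ψ : QuotSMulTop x F →ₗ[R ⧸ Ideal.span {x}] Z) :
      quotSMulTopHomEquiv x K Z (ψ ∘ₗ quotSMulTopMap x f) = quotSMulTopHomEquiv x F Z ψ ∘ₗ f :=
    rfl
  refine (quotSMulTopHomEquiv x K Z).toEquiv.forall_congr fun φ =>
    (quotSMulTopHomEquiv x F Z).toEquiv.exists_congr fun ψ => ?_
  exact (quotSMulTopHomEquiv x K Z).injective.eq_iff.symm.trans (by rw [hcomp]; rfl)

lemma extVanish_quotSMulTop_iff_s9 (hx : IsSMulRegular R x) (hX : IsSMulRegular X x) (n : ℕ) :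
    ExtVanish (R ⧸ Ideal.span {x}) (QuotSMulTop x X) Z (n + 1) ↔ ExtVanish R X Z (n + 1) := by
  induction n generalizing X with
  | zero =>
    obtain ⟨K, F, f, g, hF, h⟩ := exists_isShortExact_free (R := R) X
    rw [(h.quotSMulTop hX).extVanish_one_iff, h.extVanish_one_iff]
    exact forall_exists_comp_quotSMulTopMap_eq_iff f
  | succ n ih =>
    obtain ⟨K, F, f, g, hF, h⟩ := exists_isShortExact_free (R := R) X
    have hK : IsSMulRegular K x := (isSMulRegular_of_flat hx F).of_injective f h.1
    rw [(h.quotSMulTop hX).extVanish_add_two_iff, h.extVanish_add_two_iff]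
    exact ih hK

lemma ExtVanish.quotSMulTop (hx : IsSMulRegular R x) (hX : IsSMulRegular X x) {n : ℕ}
    (h₁ : ExtVanish R X R (n + 1)) (h₂ : ExtVanish R X R (n + 2)) :
    ExtVanish (R ⧸ Ideal.span {x}) (QuotSMulTop x X) (R ⧸ Ideal.span {x}) (n + 1) :=
  (extVanish_quotSMulTop_iff_s9 hx hX n).mpr <|
    h₁.of_isShortExact_right (isShortExact_lsmul_mkQ_span_singleton hx) h₂

end ChangeOfRings

section Dual

/-- The comparison map `X^*/xX^* → (X/xX)^*`, sending the class of `f` to `f` modulo `x`. -/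
noncomputable def quotSMulTopDual (x : R) (X : Type*) [AddCommGroup X] [Module R X] :
    QuotSMulTop x (Module.Dual R X) →ₗ[R ⧸ Ideal.span {x}]
      Module.Dual (R ⧸ Ideal.span {x}) (QuotSMulTop x X) :=
  (quotSMulTopHomEquiv x (Module.Dual R X) _).symm <|
    (quotSMulTopHomEquiv x X (R ⧸ Ideal.span {x})).symm.toLinearMap ∘ₗ
      (Ideal.span {x}).mkQ.compRight R

variable {x : R} {X : Type u} [AddCommGroup X] [Module R X]

lemma quotSMulTopDual_injective (hx : IsSMulRegular R x) :
    Function.Injective (quotSMulTopDual x X) := by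
  rw [injective_iff_map_eq_zero, (Submodule.mkQ_surjective _).forall]
  intro f hf
  have hf' : (Ideal.span {x}).mkQ ∘ₗ f = 0 :=
    congrArg (quotSMulTopHomEquiv x X (R ⧸ Ideal.span {x})) hf
  obtain ⟨θ, rfl⟩ :=
    (isShortExact_lsmul_mkQ_span_singleton hx).exists_comp_eq_of_comp_eq_zero hf'
  exact (Submodule.Quotient.mk_eq_zero _).mpr (Submodule.smul_mem_pointwise_smul θ x ⊤ trivial)

lemma quotSMulTopDual_surjective (hx : IsSMulRegular R x) (hX : ExtVanish R X R 1) :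
    Function.Surjective (quotSMulTopDual x X) := by
  intro φ
  obtain ⟨f, hf⟩ := hX.exists_comp_eq (isShortExact_lsmul_mkQ_span_singleton hx)
    (quotSMulTopHomEquiv x X (R ⧸ Ideal.span {x}) φ)
  exact ⟨Submodule.Quotient.mk f, (quotSMulTopHomEquiv x X (R ⧸ Ideal.span {x})).injective hf⟩

/-- The comparison map `X^*/xX^* → (X/xX)^*` as an isomorphism, when `Ext^1(X, R) = 0`. -/
noncomputable def quotSMulTopDualEquiv (hx : IsSMulRegular R x) (hX : ExtVanish R X R 1) :
    QuotSMulTop x (Module.Dual R X) ≃ₗ[R ⧸ Ideal.span {x}]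
      Module.Dual (R ⧸ Ideal.span {x}) (QuotSMulTop x X) :=
  LinearEquiv.ofBijective (quotSMulTopDual x X)
    ⟨quotSMulTopDual_injective hx, quotSMulTopDual_surjective hx hX⟩

variable (x X) in
lemma dualMap_quotSMulTopDual_comp_eval :
    (quotSMulTopDual x X).dualMap ∘ₗ Module.Dual.eval (R ⧸ Ideal.span {x}) (QuotSMulTop x X) =
      quotSMulTopDual x (Module.Dual R X) ∘ₗ quotSMulTopMap x (Module.Dual.eval R X) := by
  exact LinearMap.ext <| (Submodule.mkQ_surjective _).forall.mpr fun a =>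
    LinearMap.ext <| (Submodule.mkQ_surjective _).forall.mpr fun f => rfl

lemma bijective_eval_quotSMulTop (hx : IsSMulRegular R x)
    (heval : Function.Bijective (Module.Dual.eval R X)) (hX : ExtVanish R X R 1)
    (hX' : ExtVanish R (Module.Dual R X) R 1) :
    Function.Bijective (Module.Dual.eval (R ⧸ Ideal.span {x}) (QuotSMulTop x X)) := by
  have hright : Function.Bijective
      (quotSMulTopDual x (Module.Dual R X) ∘ₗ quotSMulTopMap x (Module.Dual.eval R X)) :=
    (quotSMulTopDualEquiv hx hX').bijective.comp
      (quotSMulTopCongr x (LinearEquiv.ofBijective _ heval)).bijective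
  rw [← dualMap_quotSMulTopDual_comp_eval] at hright
  exact (Function.Bijective.of_comp_iff' (quotSMulTopDualEquiv hx hX).dualMap.bijective _).mp
    hright

end Dual

section GorensteinDimension

variable {x : R}

lemma IsTotallyReflexive.isSMulRegular {X : Type u} [AddCommGroup X] [Module R X]
    (h : IsTotallyReflexive R X) (hx : IsSMulRegular R x) : IsSMulRegular X x :=
  (isSMulRegular_linearMap hx).of_injective (Module.Dual.eval R X) h.2.1.1

lemma IsTotallyReflexive.quotSMulTop {X : Type u} [AddCommGroup X] [Module R X]
    (h : IsTotallyReflexive R X) (hx : IsSMulRegular R x) :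
    IsTotallyReflexive (R ⧸ Ideal.span {x}) (QuotSMulTop x X) := by
  have hX := h.isSMulRegular hx
  obtain ⟨hfin, heval, hext, hext'⟩ := h
  refine ⟨finite_quotSMulTop x X,
    bijective_eval_quotSMulTop hx heval (hext 1 le_rfl) (hext' 1 le_rfl), ?_, ?_⟩ <;>
    rintro (_ | n) hn
  · omega
  · exact (hext _ hn).quotSMulTop hx hX (hext _ (by omega))
  · omega
  · exact ((hext' _ hn).quotSMulTop hx (isSMulRegular_linearMap hx)
      (hext' _ (by omega))).of_linearEquiv (quotSMulTopDualEquiv hx (hext 1 le_rfl))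

lemma GdimLE.quotSMulTop {M : ModuleCat.{u} R} {n : ℕ} (h : GdimLE R n M)
    (hx : IsSMulRegular R x) (hM : IsSMulRegular M x) :
    GdimLE (R ⧸ Ideal.span {x}) n (ModuleCat.of _ (QuotSMulTop x M)) := by
  induction n generalizing M with
  | zero => exact IsTotallyReflexive.quotSMulTop h hx
  | succ n ih =>
    obtain ⟨X, K, f, g, hX, hs, hK⟩ := h
    have hKx : IsSMulRegular K x := (hX.isSMulRegular hx).of_injective f hs.1
    exact ⟨ModuleCat.of _ (QuotSMulTop x X), ModuleCat.of _ (QuotSMulTop x K),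
      quotSMulTopMap x f, quotSMulTopMap x g, hX.quotSMulTop hx, hs.quotSMulTop hM, ih hK hKx⟩

end GorensteinDimension

section ReducingSequences

variable {x : R}

lemma IsSyzygy.isSMulRegular {n : ℕ} {W K : ModuleCat.{u} R} (h : IsSyzygy R n W K)
    (hx : IsSMulRegular R x) (hK : IsSMulRegular K x) : IsSMulRegular W x := by
  induction n generalizing K with
  | zero =>
    obtain ⟨e⟩ := h
    exact hK.of_injective e.toLinearMap e.injective
  | succ n ih =>
    obtain ⟨V, F, f, g, hF, -, hs, hW⟩ := h
    exact ih hW ((isSMulRegular_of_flat hx F).of_injective f hs.1)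

lemma IsSyzygy.quotSMulTop {n : ℕ} {W K : ModuleCat.{u} R} (h : IsSyzygy R n W K)
    (hx : IsSMulRegular R x) (hK : IsSMulRegular K x) :
    IsSyzygy (R ⧸ Ideal.span {x}) n (ModuleCat.of _ (QuotSMulTop x W))
      (ModuleCat.of _ (QuotSMulTop x K)) := by
  induction n generalizing K with
  | zero =>
    obtain ⟨e⟩ := h
    exact ⟨quotSMulTopCongr x e⟩
  | succ n ih =>
    obtain ⟨V, F, f, g, hF, hFfin, hs, hW⟩ := h
    have hV : IsSMulRegular V x := (isSMulRegular_of_flat hx F).of_injective f hs.1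
    exact ⟨ModuleCat.of _ (QuotSMulTop x V), ModuleCat.of _ (QuotSMulTop x F),
      quotSMulTopMap x f, quotSMulTopMap x g,
      inferInstanceAs (Module.Free (R ⧸ Ideal.span {x}) (QuotSMulTop x F)),
      finite_quotSMulTop x F, hs.quotSMulTop hK, ih hW hV⟩

lemma ReducingStep.isSMulRegular {K L : ModuleCat.{u} R} {a b n : ℕ}
    (h : ReducingStep R K L a b n) (hx : IsSMulRegular R x) (hK : IsSMulRegular K x) :
    IsSMulRegular L x := by
  obtain ⟨W, f, g, hW, hs⟩ := h
  exact hs.isSMulRegular (.pi fun _ => hK) (.pi fun _ => hW.isSMulRegular hx hK)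

lemma ReducingStep.quotSMulTop {K L : ModuleCat.{u} R} {a b n : ℕ}
    (h : ReducingStep R K L a b n) (hx : IsSMulRegular R x) (hK : IsSMulRegular K x) :
    ReducingStep (R ⧸ Ideal.span {x}) (ModuleCat.of _ (QuotSMulTop x K))
      (ModuleCat.of _ (QuotSMulTop x L)) a b n := by
  obtain ⟨W, f, g, hW, hs⟩ := h
  have hWb : IsSMulRegular (Fin b → W) x := .pi fun _ => hW.isSMulRegular hx hK
  exact ⟨ModuleCat.of _ (QuotSMulTop x W), _, _, hW.quotSMulTop hx hK,
    (hs.quotSMulTop hWb).comp_linearEquiv (quotSMulTopPiEquiv (fun _ : Fin a => K) x).symm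
      (quotSMulTopPiEquiv (fun _ : Fin b => W) x)⟩

variable {P : ModuleCat.{u} R → Prop} {Q : ModuleCat.{u} (R ⧸ Ideal.span {x}) → Prop}
  {M : ModuleCat.{u} R}

lemma HasReducingSeq.quotSMulTop {r : ℕ} (h : HasReducingSeq R P M r) (hx : IsSMulRegular R x)
    (hM : IsSMulRegular M x)
    (hPQ : ∀ N : ModuleCat.{u} R, IsSMulRegular N x → P N → Q (ModuleCat.of _ (QuotSMulTop x N))) :
    HasReducingSeq (R ⧸ Ideal.span {x}) Q (ModuleCat.of _ (QuotSMulTop x M)) r := by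
  obtain ⟨K, a, b, n, rfl, hfin, hstep, hP⟩ := h
  have hK (i : Fin (r + 1)) : IsSMulRegular (K i) x := by
    induction i using Fin.induction with
    | zero => exact hM
    | succ i ih => exact (hstep i).2.2.2.isSMulRegular hx ih
  refine ⟨fun i => ModuleCat.of _ (QuotSMulTop x (K i)), a, b, n, rfl,
    fun i => finite_quotSMulTop x (K i), fun i => ?_, hPQ _ (hK _) hP⟩
  obtain ⟨ha, hb, hn, hs⟩ := hstep i
  exact ⟨ha, hb, hn, hs.quotSMulTop hx (hK _)⟩

lemma reducingDim_quotSMulTop_le (hx : IsSMulRegular R x) (hM : IsSMulRegular M x)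
    (hPQ : ∀ N : ModuleCat.{u} R, IsSMulRegular N x → P N → Q (ModuleCat.of _ (QuotSMulTop x N))) :
    ReducingDim (R ⧸ Ideal.span {x}) Q (ModuleCat.of _ (QuotSMulTop x M)) ≤
      ReducingDim R P M :=
  sInf_le_sInf fun _ ⟨r, hr, h⟩ => ⟨r, hr, h.quotSMulTop hx hM hPQ⟩

end ReducingSequences

end

theorem stmt9_general (R : Type u) [CommRing R] (M : Type u) [AddCommGroup M] [Module R M]
    (x : R) (hxR : IsSMulRegular R x) (hxM : IsSMulRegular M x) :
    rGdim (R ⧸ Ideal.span {x})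
        (ModuleCat.of (R ⧸ Ideal.span {x}) (M ⧸ (x • (⊤ : Submodule R M)))) ≤
      rGdim R (ModuleCat.of R M) :=
  reducingDim_quotSMulTop_le (M := ModuleCat.of R M) hxR hxM
    fun _ hN ⟨m, hm⟩ => ⟨m, hm.quotSMulTop hxR hN⟩

theorem stmt9 (R : Type u) [CommRing R] [IsNoetherianRing R] [IsLocalRing R]
    (M : Type u) [AddCommGroup M] [Module R M] [Module.Finite R M]
    (x : R) (hx : x ∈ IsLocalRing.maximalIdeal R)
    (hxR : IsSMulRegular R x) (hxM : IsSMulRegular M x) :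
    rGdim (R ⧸ Ideal.span {x})
        (ModuleCat.of (R ⧸ Ideal.span {x}) (M ⧸ (x • (⊤ : Submodule R M)))) ≤
      rGdim R (ModuleCat.of R M) :=
  stmt9_general R M x hxR hxM
end
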